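/- Let q be a prime power, r ≥ 2, and let n ≥ 4 be a composite integer with smallest prime divisor ℓ. Set m = n if (r = 2 and n/ℓ is prime and n/ℓ ≤ 2ℓ − 5), and m = ℓ otherwise. Let α_{r,n} = q^{binom(r+n/m, r) + m − 3}·(1 − q^{−binom(r−1+n/m, r−1)})/(1 − q^{−1}) and β_{r,n} = 2·q^{−(1/2)·binom(r−1+n/ℓ, r−1) + 1}/(1 − q^{−1}). Then the number #D_{r,n}(F_q) of decomposable monic polynomials in F_q[x_1,…,x_r] of total degree n with vanishing constant term satisfies |#D_{r,n}(F_q) − α_{r,n}| ≤ α_{r,n}·β_{r,n}. -/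

import Mathlib

open MvPolynomial

/-- The key of a monomial in the degree-lexicographic order: first total degree, then
lexicographic comparison of exponent vectors. -/
noncomputable def degLexKey {r : ℕ} (m : Fin r →₀ ℕ) : Lex (ℕ × Lex (Fin r →₀ ℕ)) :=
  toLex (m.sum fun _ e => e, toLex m)

/-- A multivariate polynomial is monic if the coefficient of its deg-lex leading monomial is 1. -/
def MvMonic {r : ℕ} {F : Type*} [CommSemiring F] (f : MvPolynomial (Fin r) F) : Prop :=
  ∃ m ∈ f.support, (∀ m' ∈ f.support, degLexKey m' ≤ degLexKey m) ∧ f.coeff m = 1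

/-- The number of decomposable monic `r`-variate polynomials of total degree `n` with vanishing
constant term over `F`: those of the form `g ∘ h` with `g` univariate of degree at least 2 and
`h` nonconstant. -/
noncomputable def Dcount (F : Type) [Field F] (r n : ℕ) : ℕ :=
  Set.ncard {f : MvPolynomial (Fin r) F | f.totalDegree = n ∧ MvMonic f ∧
    MvPolynomial.coeff 0 f = 0 ∧
    ∃ (g : Polynomial F) (h : MvPolynomial (Fin r) F),
      2 ≤ g.natDegree ∧ 0 < h.totalDegree ∧ f = Polynomial.aeval h g}

/-
Normalising both components of a decomposition, the decomposable polynomials are the union over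
the divisors `d ≥ 2` of `n` of the images of `(g, h) ↦ g ∘ h`, where `g` and `h` are monic without
constant term, of degrees `d` and `n / d`. Counting the pairs `(g, h)` for each `d` gives an upper
bound in which one divisor dominates: `d = ℓ`, or `d = n` in the exceptional case.

For the lower bound, composition has to be almost injective on the dominant pairs. For linear `h`
it is injective. For prime `d = ℓ`, let `g₁ ∘ h₁ = g₂ ∘ h₂` with `h₁ ≠ h₂`. Then `h₁` and
`h₂ = h₁ + D` have the same leading form, and comparing degrees modulo `deg h₁` in
`(g₁ - g₂)(h₁) = g₂(h₁ + D) - g₂(h₁)` shows that `ℓ` is the characteristic. Now `D ^ ℓ` splits off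
on the right, and whichever of the other terms matches it, some power `B` of the leading form of
`D` is, up to a constant, a power `A < B` of the leading form of `h₁`. By unique factorisation the
leading form of `h₁` is then a proper power, and this happens for few `h₁`.
-/

section UnivariateCollision

open scoped Polynomial

section Degrees

variable {F R : Type*} [Field F] [CommRing R] [Algebra F R]

lemma aeval_eq_map_comp (g : F[X]) (H : R[X]) :
    Polynomial.aeval H g = (g.map (algebraMap F R)).comp H := by
  rw [Polynomial.comp, Polynomial.eval₂_map]
  rfl

variable [IsDomain R]

lemma natDegree_aeval_polynomial (g : F[X]) (H : R[X]) :
    (Polynomial.aeval H g).natDegree = g.natDegree * H.natDegree := by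
  rw [aeval_eq_map_comp, Polynomial.natDegree_comp, Polynomial.natDegree_map]

lemma leadingCoeff_aeval_polynomial (g : F[X]) {H : R[X]} (hH : H.natDegree ≠ 0) :
    (Polynomial.aeval H g).leadingCoeff =
      algebraMap F R g.leadingCoeff * H.leadingCoeff ^ g.natDegree := by
  rw [aeval_eq_map_comp, Polynomial.leadingCoeff_comp hH, Polynomial.leadingCoeff_map,
    Polynomial.natDegree_map]

end Degrees

section Differences

variable {R : Type*} [CommRing R] {H D : R[X]}

lemma natDegree_add_pow_sub_pow_le (hDH : D.natDegree < H.natDegree) (i : ℕ) :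
    ((H + D) ^ (i + 1) - H ^ (i + 1)).natDegree ≤ D.natDegree + i * H.natDegree := by
  induction i with
  | zero => simp
  | succ i ih =>
    have split : (H + D) ^ (i + 2) - H ^ (i + 2) =
        (H + D) * ((H + D) ^ (i + 1) - H ^ (i + 1)) + D * H ^ (i + 1) := by ring
    rw [split]
    refine Polynomial.natDegree_add_le_of_degree_le ?_ ?_
    · refine (Polynomial.natDegree_mul_le_of_le
        (Polynomial.natDegree_add_le_of_degree_le le_rfl hDH.le) ih).trans_eq ?_
      ring
    · exact Polynomial.natDegree_mul_le_of_le le_rfl (Polynomial.natDegree_pow_le)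

lemma coeff_add_pow_sub_pow (hDH : D.natDegree < H.natDegree) (i : ℕ) :
    ((H + D) ^ (i + 1) - H ^ (i + 1)).coeff (D.natDegree + i * H.natDegree) =
      (i + 1) * H.leadingCoeff ^ i * D.leadingCoeff := by
  induction i with
  | zero => simp
  | succ i ih =>
    have split : (H + D) ^ (i + 2) - H ^ (i + 2) =
        (H + D) * ((H + D) ^ (i + 1) - H ^ (i + 1)) + D * H ^ (i + 1) := by ring
    have degree_eq : D.natDegree + (i + 1) * H.natDegree =
        H.natDegree + (D.natDegree + i * H.natDegree) := by ring
    rw [split, Polynomial.coeff_add, Polynomial.coeff_mul_add_eq_of_natDegree_le le_rfl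
      Polynomial.natDegree_pow_le, Polynomial.coeff_pow_of_natDegree_le le_rfl, degree_eq,
      Polynomial.coeff_mul_add_eq_of_natDegree_le
        (Polynomial.natDegree_add_le_of_degree_le le_rfl hDH.le)
        (natDegree_add_pow_sub_pow_le hDH i), ih, Polynomial.coeff_add,
      Polynomial.coeff_eq_zero_of_natDegree_lt hDH, Polynomial.coeff_natDegree,
      Polynomial.coeff_natDegree]
    push_cast
    ring

variable {A : Type*} [CommRing A] [Algebra A R] {g : A[X]} {M : ℕ}

lemma aeval_add_sub_aeval_eq_sum (hg : g.natDegree = M + 1) :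
    Polynomial.aeval (H + D) g - Polynomial.aeval H g =
      ∑ i ∈ Finset.range (M + 1), g.coeff (i + 1) • ((H + D) ^ (i + 1) - H ^ (i + 1)) := by
  rw [Polynomial.aeval_eq_sum_range, Polynomial.aeval_eq_sum_range, ← Finset.sum_sub_distrib, hg,
    Finset.sum_range_succ']
  simp only [smul_sub, pow_zero, sub_self, add_zero]

lemma natDegree_aeval_add_sub_aeval_le (hDH : D.natDegree < H.natDegree)
    (hg : g.natDegree = M + 1) :
    (Polynomial.aeval (H + D) g - Polynomial.aeval H g).natDegree ≤
      D.natDegree + M * H.natDegree := by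
  rw [aeval_add_sub_aeval_eq_sum hg]
  refine Polynomial.natDegree_sum_le_of_forall_le _ _ fun i hi => ?_
  have i_le : i ≤ M := Finset.mem_range_succ_iff.mp hi
  calc _ ≤ _ := Polynomial.natDegree_smul_le _ _
    _ ≤ _ := natDegree_add_pow_sub_pow_le hDH i
    _ ≤ _ := by gcongr

lemma coeff_aeval_add_sub_aeval (hDH : D.natDegree < H.natDegree) (hg : g.natDegree = M + 1) :
    (Polynomial.aeval (H + D) g - Polynomial.aeval H g).coeff (D.natDegree + M * H.natDegree) =
      algebraMap A R ((M + 1) * g.leadingCoeff) * H.leadingCoeff ^ M * D.leadingCoeff := by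
  have lower_terms : ∀ i ∈ Finset.range M,
      (g.coeff (i + 1) • ((H + D) ^ (i + 1) - H ^ (i + 1))).coeff
        (D.natDegree + M * H.natDegree) = 0 := by
    intro i hi
    rw [Polynomial.coeff_smul, Polynomial.coeff_eq_zero_of_natDegree_lt (n := _ + _ * _), smul_zero]
    refine (natDegree_add_pow_sub_pow_le hDH i).trans_lt ?_
    have := Nat.mul_lt_mul_of_pos_right (Finset.mem_range.mp hi) (Nat.zero_lt_of_lt hDH)
    lia
  rw [aeval_add_sub_aeval_eq_sum hg, Polynomial.finsetSum_coeff, Finset.sum_range_succ,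
    Finset.sum_eq_zero lower_terms, Polynomial.coeff_smul, coeff_add_pow_sub_pow hDH,
    Algebra.smul_def, ← hg, Polynomial.coeff_natDegree]
  simp only [map_mul, map_add, map_natCast, map_one]
  ring

end Differences

section Collisions

variable {F R : Type*} [Field F] [CommRing R] [Algebra F R] {H D : R[X]} {g : F[X]} {M : ℕ}

lemma pow_eq_aeval_sub_of_collision {l : ℕ} [ExpChar R l] {g₁ g₂ : F[X]} (hg₂ : g₂.Monic)
    (hdeg : g₂.natDegree = l) (h : Polynomial.aeval H g₁ = Polynomial.aeval (H + D) g₂) :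
    D ^ l = Polynomial.aeval H (g₁ - g₂) -
      (Polynomial.aeval (H + D) g₂.eraseLead - Polynomial.aeval H g₂.eraseLead) := by
  have aeval_g₂ (x : R[X]) :
      Polynomial.aeval x g₂ = Polynomial.aeval x g₂.eraseLead + x ^ l := by
    conv_lhs => rw [← g₂.eraseLead_add_C_mul_X_pow, hg₂.leadingCoeff, hdeg]
    simp only [map_one, one_mul, map_add, map_pow, Polynomial.aeval_X]
  rw [map_sub, h, aeval_g₂ (H + D), aeval_g₂ H, add_pow_expChar]
  ring

variable [IsDomain R]

lemma coeff_aeval_add_sub_aeval_ne_zero (hDH : D.natDegree < H.natDegree) (hD : D ≠ 0)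
    (hg : g.natDegree = M + 1) (hM : (M + 1 : F) ≠ 0) :
    (Polynomial.aeval (H + D) g - Polynomial.aeval H g).coeff
      (D.natDegree + M * H.natDegree) ≠ 0 := by
  have hg0 : g ≠ 0 := Polynomial.ne_zero_of_natDegree_gt (n := M) (by lia)
  have hH : H ≠ 0 := Polynomial.ne_zero_of_natDegree_gt hDH
  rw [coeff_aeval_add_sub_aeval hDH hg]
  refine mul_ne_zero (mul_ne_zero ?_ (pow_ne_zero _ ?_)) ?_
  · rw [Ne, FaithfulSMul.algebraMap_eq_zero_iff]
    exact mul_ne_zero hM (Polynomial.leadingCoeff_ne_zero.mpr hg0)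
  · exact Polynomial.leadingCoeff_ne_zero.mpr hH
  · exact Polynomial.leadingCoeff_ne_zero.mpr hD

lemma natDegree_aeval_add_sub_aeval (hDH : D.natDegree < H.natDegree) (hD : D ≠ 0)
    (hg : g.natDegree = M + 1) (hM : (M + 1 : F) ≠ 0) :
    (Polynomial.aeval (H + D) g - Polynomial.aeval H g).natDegree =
      D.natDegree + M * H.natDegree :=
  Polynomial.natDegree_eq_of_le_of_coeff_ne_zero (natDegree_aeval_add_sub_aeval_le hDH hg)
    (coeff_aeval_add_sub_aeval_ne_zero hDH hD hg hM)

lemma leadingCoeff_aeval_add_sub_aeval (hDH : D.natDegree < H.natDegree) (hD : D ≠ 0)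
    (hg : g.natDegree = M + 1) (hM : (M + 1 : F) ≠ 0) :
    (Polynomial.aeval (H + D) g - Polynomial.aeval H g).leadingCoeff =
      algebraMap F R ((M + 1) * g.leadingCoeff) * H.leadingCoeff ^ M * D.leadingCoeff := by
  rw [Polynomial.leadingCoeff, natDegree_aeval_add_sub_aeval hDH hD hg hM,
    coeff_aeval_add_sub_aeval hDH hg]

/- The degree `deg D + M * deg H` of `g (H + D) - g H` is not a multiple of `deg H`. -/
lemma natDegree_aeval_ne_natDegree_aeval_add_sub_aeval (hDH : D.natDegree < H.natDegree)
    (hD : 0 < D.natDegree) (hg : g.natDegree = M + 1) (hM : (M + 1 : F) ≠ 0) (e : F[X]) :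
    (Polynomial.aeval H e).natDegree ≠
      (Polynomial.aeval (H + D) g - Polynomial.aeval H g).natDegree := by
  rw [natDegree_aeval_polynomial, natDegree_aeval_add_sub_aeval hDH
    (Polynomial.ne_zero_of_natDegree_gt hD) hg hM]
  intro h
  have residue := congrArg (· % H.natDegree) h
  simp only [Nat.mul_mod_left, Nat.add_mul_mod_self_right, Nat.mod_eq_of_lt hDH] at residue
  lia

lemma natCast_natDegree_eq_zero_of_aeval_eq_aeval_add (hDH : D.natDegree < H.natDegree)
    (hD : 0 < D.natDegree) {g₁ g₂ : F[X]}
    (h : Polynomial.aeval H g₁ = Polynomial.aeval (H + D) g₂) : (g₂.natDegree : F) = 0 := by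
  rcases hM : g₂.natDegree with _ | M
  · exact Nat.cast_zero
  by_contra hne
  refine natDegree_aeval_ne_natDegree_aeval_add_sub_aeval hDH hD hM
    (by rwa [Nat.cast_succ] at hne) (g₁ - g₂) ?_
  rw [map_sub, h]

lemma pos_and_lt_of_mul_eq_mul {l a δ h : ℕ} (hl : 0 < l) (hδ : 0 < δ) (hδh : δ < h)
    (heq : l * δ = a * h) : 1 ≤ a ∧ a < l := by
  constructor
  · refine Nat.pos_of_ne_zero ?_
    rintro rfl
    exact (Nat.mul_pos hl hδ).ne' (heq.trans (Nat.zero_mul h))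
  · refine Nat.lt_of_mul_lt_mul_right (a := h) ?_
    rw [← heq]
    exact Nat.mul_lt_mul_of_pos_left hδh hl

lemma associated_of_eq_algebraMap_mul {A S : Type*} [Field A] [CommRing S] [Algebra A S] {c : A}
    {x y : S} (hc : c ≠ 0) (h : x = algebraMap A S c * y) : Associated x y := by
  rw [h]
  exact associated_unit_mul_left y _ ((IsUnit.mk0 c hc).map (algebraMap A S))

lemma exists_associated_pow_of_leading_eq_aeval {l : ℕ} (hl : 0 < l)
    (hDH : D.natDegree < H.natDegree) (hD : 0 < D.natDegree) {e : F[X]}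
    (hdeg : (D ^ l).natDegree = (Polynomial.aeval H e).natDegree)
    (hlead : (D ^ l).leadingCoeff = (Polynomial.aeval H e).leadingCoeff) :
    ∃ A B, 1 ≤ A ∧ A < B ∧ Associated (D.leadingCoeff ^ B) (H.leadingCoeff ^ A) := by
  rw [Polynomial.natDegree_pow, natDegree_aeval_polynomial] at hdeg
  rw [Polynomial.leadingCoeff_pow, leadingCoeff_aeval_polynomial _ (by lia)] at hlead
  obtain ⟨he_pos, he_lt⟩ := pos_and_lt_of_mul_eq_mul hl hD hDH hdeg
  have he : e ≠ 0 := Polynomial.ne_zero_of_natDegree_gt he_pos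
  exact ⟨_, l, he_pos, he_lt,
    associated_of_eq_algebraMap_mul (Polynomial.leadingCoeff_ne_zero.mpr he) hlead⟩

lemma exists_associated_pow_of_leading_eq_sub {l : ℕ} (hDH : D.natDegree < H.natDegree)
    (hD : 0 < D.natDegree) {b : F[X]} (hb : b.natDegree = M + 1) (hM : (M + 1 : F) ≠ 0)
    (hMl : M + 1 < l)
    (hdeg : (D ^ l).natDegree =
      (Polynomial.aeval (H + D) b - Polynomial.aeval H b).natDegree)
    (hlead : (D ^ l).leadingCoeff =
      -(Polynomial.aeval (H + D) b - Polynomial.aeval H b).leadingCoeff) :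
    ∃ A B, 1 ≤ A ∧ A < B ∧ Associated (D.leadingCoeff ^ B) (H.leadingCoeff ^ A) := by
  have hD0 : D ≠ 0 := Polynomial.ne_zero_of_natDegree_gt hD
  have hb0 : b ≠ 0 := Polynomial.ne_zero_of_natDegree_gt (n := M) (by lia)
  obtain ⟨B, rfl⟩ : ∃ B, l = B + 1 := ⟨l - 1, by lia⟩
  rw [natDegree_aeval_add_sub_aeval hDH hD0 hb hM, Polynomial.natDegree_pow] at hdeg
  rw [leadingCoeff_aeval_add_sub_aeval hDH hD0 hb hM, Polynomial.leadingCoeff_pow,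
    pow_succ, ← neg_mul] at hlead
  have exponents : B * D.natDegree = M * H.natDegree := by linarith
  refine ⟨M, B, (pos_and_lt_of_mul_eq_mul (by lia) hD hDH exponents).1, by lia, ?_⟩
  refine associated_of_eq_algebraMap_mul (c := -((M + 1) * b.leadingCoeff))
    (neg_ne_zero.mpr (mul_ne_zero hM (Polynomial.leadingCoeff_ne_zero.mpr hb0))) ?_
  rw [map_neg, neg_mul]
  exact mul_right_cancel₀ (Polynomial.leadingCoeff_ne_zero.mpr hD0) hlead

lemma exists_associated_pow_of_pow_eq_sub {l : ℕ} [CharP F l] (hl : l.Prime)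
    (hDH : D.natDegree < H.natDegree) (hD : 0 < D.natDegree) {e b : F[X]} (hb : b.natDegree < l)
    (h : D ^ l = Polynomial.aeval H e - (Polynomial.aeval (H + D) b - Polynomial.aeval H b)) :
    ∃ A B, 1 ≤ A ∧ A < B ∧ Associated (D.leadingCoeff ^ B) (H.leadingCoeff ^ A) := by
  rcases hM : b.natDegree with _ | M
  · have constant : Polynomial.aeval (H + D) b - Polynomial.aeval H b = 0 := by
      rw [Polynomial.eq_C_of_natDegree_eq_zero hM, Polynomial.aeval_C, Polynomial.aeval_C,
        sub_self]
    rw [constant, sub_zero] at h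
    exact exists_associated_pow_of_leading_eq_aeval hl.pos hDH hD (congrArg _ h) (congrArg _ h)
  have hM0 : (M + 1 : F) ≠ 0 := by
    rw [← Nat.cast_succ, Ne, CharP.cast_eq_zero_iff F l]
    exact Nat.not_dvd_of_pos_of_lt M.succ_pos (by lia)
  rcases (natDegree_aeval_ne_natDegree_aeval_add_sub_aeval hDH hD hM hM0 e).lt_or_gt with
    hlt | hlt
  · refine exists_associated_pow_of_leading_eq_sub (l := l) hDH hD hM hM0 (by lia) ?_ ?_ <;> rw [h]
    · exact Polynomial.natDegree_sub_eq_right_of_natDegree_lt hlt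
    · exact Polynomial.leadingCoeff_sub_of_degree_lt' (Polynomial.degree_lt_degree hlt)
  · refine exists_associated_pow_of_leading_eq_aeval (e := e) hl.pos hDH hD ?_ ?_ <;> rw [h]
    · exact Polynomial.natDegree_sub_eq_left_of_natDegree_lt hlt
    · exact Polynomial.leadingCoeff_sub_of_degree_lt (Polynomial.degree_lt_degree hlt)

lemma exists_associated_leadingCoeff_pow_of_collision {g₁ g₂ : F[X]} (hg₂ : g₂.Monic)
    (hprime : g₂.natDegree.Prime) (hDH : D.natDegree < H.natDegree) (hD : 0 < D.natDegree)
    (h : Polynomial.aeval H g₁ = Polynomial.aeval (H + D) g₂) :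
    ∃ A B, 1 ≤ A ∧ A < B ∧ Associated (D.leadingCoeff ^ B) (H.leadingCoeff ^ A) := by
  have : CharP F g₂.natDegree := (CharP.charP_iff_prime_eq_zero hprime).mpr
    (natCast_natDegree_eq_zero_of_aeval_eq_aeval_add hDH hD h)
  have : CharP R g₂.natDegree := charP_of_injective_algebraMap (algebraMap F R).injective _
  have : ExpChar R g₂.natDegree := ExpChar.prime hprime
  exact exists_associated_pow_of_pow_eq_sub hprime hDH hD
    ((Polynomial.eraseLead_natDegree_le _).trans_lt (Nat.sub_one_lt hprime.ne_zero))
    (pow_eq_aeval_sub_of_collision hg₂ rfl h)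

end Collisions
end UnivariateCollision

section ProperPower

/-- `x` is, up to a unit factor, a `t`-th power for some exponent `t ≥ 2`. -/
def IsProperPower {R : Type*} [Monoid R] (x : R) : Prop :=
  ∃ t ≥ 2, ∃ u, Associated (u ^ t) x

variable {R : Type*} [CommRing R] [IsDomain R] [IsIntegrallyClosed R] {x y : R} {A B : ℕ}

lemma associated_of_associated_pow {n : ℕ} (hn : n ≠ 0) (h : Associated (x ^ n) (y ^ n)) :
    Associated x y :=
  associated_of_dvd_dvd ((IsIntegrallyClosed.pow_dvd_pow_iff hn).mp h.dvd)
    ((IsIntegrallyClosed.pow_dvd_pow_iff hn).mp h.dvd')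

lemma isProperPower_of_associated_pow_of_coprime (hx : x ≠ 0) (hB : 2 ≤ B)
    (hcop : A.Coprime B) (h : Associated (y ^ B) (x ^ A)) : IsProperPower x := by
  obtain ⟨m, -, hm⟩ := Nat.exists_mul_mod_eq_one_of_coprime hcop hB
  obtain ⟨s, hs⟩ : ∃ s, A * m = s * B + 1 :=
    ⟨A * m / B, by rw [mul_comm _ B, ← hm, Nat.div_add_mod]⟩
  have powers : Associated ((y ^ m) ^ B) ((x ^ s) ^ B * x) := by
    have := h.pow_pow (n := m)
    rwa [← pow_mul, mul_comm B, pow_mul, ← pow_mul x, hs, pow_succ, pow_mul] at this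
  obtain ⟨z, hz⟩ : x ^ s ∣ y ^ m :=
    (IsIntegrallyClosed.pow_dvd_pow_iff (by lia)).mp ((Dvd.intro _ rfl).trans powers.dvd')
  rw [hz, mul_pow] at powers
  exact ⟨B, hB, z, powers.of_mul_left (Associated.refl _) (pow_ne_zero _ (pow_ne_zero _ hx))⟩

lemma isProperPower_of_associated_pow (hx : x ≠ 0) (hA : 1 ≤ A) (hAB : A < B)
    (h : Associated (y ^ B) (x ^ A)) : IsProperPower x := by
  obtain ⟨d, a, b, hd, hcop, rfl, rfl⟩ := Nat.exists_coprime' (m := A) (n := B)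
    (Nat.gcd_pos_of_pos_left B hA)
  rw [pow_mul, pow_mul] at h
  have ha : 0 < a := Nat.pos_of_mul_pos_right hA
  have hab : a < b := Nat.lt_of_mul_lt_mul_right hAB
  exact isProperPower_of_associated_pow_of_coprime hx (by lia) hcop
    (associated_of_associated_pow hd.ne' h)

end ProperPower

section LeadingForm

variable {σ R : Type*}

section Grading

variable [CommSemiring R]

/-- The homogenising map `f ↦ ∑ i, fᵢ Tⁱ`, where `fᵢ` is the homogeneous component of degree `i`:
it turns the total degree into the degree in the single variable `T`. -/
noncomputable def gradingHom (σ R : Type*) [CommSemiring R] :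
    MvPolynomial σ R →ₐ[R] Polynomial (MvPolynomial σ R) :=
  MvPolynomial.aeval fun i => Polynomial.C (X i) * Polynomial.X

/-- The leading form of `f`: its homogeneous component of highest degree. -/
noncomputable def leadingForm (f : MvPolynomial σ R) : MvPolynomial σ R :=
  homogeneousComponent f.totalDegree f

lemma gradingHom_monomial (m : σ →₀ ℕ) (c : R) :
    gradingHom σ R (monomial m c) = Polynomial.monomial m.degree (monomial m c) := by
  rw [gradingHom, aeval_monomial, ← Polynomial.C_mul_X_pow_eq_monomial, monomial_eq, Finsupp.prod,
    Finsupp.prod, map_mul, map_prod, mul_assoc]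
  simp only [mul_pow, Finset.prod_mul_distrib, map_pow]
  rw [Finset.prod_pow_eq_pow_sum, Finsupp.degree]
  rfl

lemma coeff_gradingHom (f : MvPolynomial σ R) (i : ℕ) :
    (gradingHom σ R f).coeff i = homogeneousComponent i f := by
  induction f using MvPolynomial.induction_on' with
  | monomial m c =>
    rw [gradingHom_monomial, Polynomial.coeff_monomial,
      homogeneousComponent_of_mem (isHomogeneous_monomial c rfl)]
    exact if_congr eq_comm rfl rfl
  | add p q hp hq => rw [map_add, Polynomial.coeff_add, hp, hq, map_add]

lemma leadingForm_ne_zero {f : MvPolynomial σ R} (hf : f ≠ 0) : leadingForm f ≠ 0 := by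
  obtain ⟨m, hm, hdeg⟩ := Finset.exists_mem_eq_sup f.support
    (support_nonempty.mpr hf) (fun m => m.degree)
  refine ne_zero_iff.mpr ⟨m, ?_⟩
  rw [leadingForm, coeff_homogeneousComponent, if_pos]
  · exact mem_support_iff.mp hm
  · exact hdeg.symm

lemma natDegree_gradingHom (f : MvPolynomial σ R) :
    (gradingHom σ R f).natDegree = f.totalDegree := by
  rcases eq_or_ne f 0 with rfl | hf
  · rw [map_zero, Polynomial.natDegree_zero, totalDegree_zero]
  refine Polynomial.natDegree_eq_of_le_of_coeff_ne_zero ?_ ?_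
  · refine Polynomial.natDegree_le_iff_coeff_eq_zero.mpr fun N hN => ?_
    rw [coeff_gradingHom, homogeneousComponent_eq_zero _ _ hN]
  · rw [coeff_gradingHom]
    exact leadingForm_ne_zero hf

lemma leadingCoeff_gradingHom (f : MvPolynomial σ R) :
    (gradingHom σ R f).leadingCoeff = leadingForm f := by
  rw [Polynomial.leadingCoeff, natDegree_gradingHom, coeff_gradingHom, leadingForm]

lemma isHomogeneous_leadingForm (f : MvPolynomial σ R) :
    (leadingForm f).IsHomogeneous f.totalDegree :=
  homogeneousComponent_isHomogeneous _ _

lemma leadingForm_of_isHomogeneous {f : MvPolynomial σ R} {n : ℕ} (hf : f.IsHomogeneous n) :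
    leadingForm f = f := by
  rcases eq_or_ne f 0 with rfl | hf0
  · exact map_zero _
  · rw [leadingForm, hf.totalDegree hf0, homogeneousComponent_eq_self hf]

lemma support_leadingForm_subset (f : MvPolynomial σ R) :
    (leadingForm f).support ⊆ f.support := by
  rw [leadingForm, support_homogeneousComponent]
  exact Finset.filter_subset _ _

lemma totalDegree_leadingForm {f : MvPolynomial σ R} (hf : f ≠ 0) :
    (leadingForm f).totalDegree = f.totalDegree :=
  (isHomogeneous_leadingForm f).totalDegree (leadingForm_ne_zero hf)

lemma leadingForm_pow [NoZeroDivisors R] (f : MvPolynomial σ R) (n : ℕ) :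
    leadingForm (f ^ n) = leadingForm f ^ n := by
  rw [← leadingCoeff_gradingHom, map_pow, Polynomial.leadingCoeff_pow, leadingCoeff_gradingHom]

lemma eq_zero_of_totalDegree_eq_zero {f : MvPolynomial σ R} (hdeg : f.totalDegree = 0)
    (h0 : f.coeff 0 = 0) : f = 0 := by
  rw [totalDegree_eq_zero_iff_eq_C.mp hdeg, h0, C_0]

end Grading

lemma totalDegree_sub_lt_of_leadingForm_eq [CommRing R] {f g : MvPolynomial σ R}
    (hg : 0 < g.totalDegree) (hdeg : f.totalDegree = g.totalDegree)
    (hlead : leadingForm f = leadingForm g) : (f - g).totalDegree < g.totalDegree := by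
  rcases eq_or_ne (f - g) 0 with hfg | hfg
  · rwa [hfg, totalDegree_zero]
  have hdiff : gradingHom σ R (f - g) ≠ 0 := by
    rw [← Polynomial.leadingCoeff_ne_zero, leadingCoeff_gradingHom]
    exact leadingForm_ne_zero hfg
  simp only [← natDegree_gradingHom, ← leadingCoeff_gradingHom] at hg hdeg hlead ⊢
  refine Polynomial.natDegree_lt_natDegree hdiff ?_
  have hg0 : gradingHom σ R g ≠ 0 := Polynomial.ne_zero_of_natDegree_gt hg
  have hf0 : gradingHom σ R f ≠ 0 := Polynomial.ne_zero_of_natDegree_gt (hdeg ▸ hg)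
  rw [map_sub]
  refine Polynomial.degree_sub_lt_right ?_ hg0 hlead
  rw [Polynomial.degree_eq_natDegree hf0, Polynomial.degree_eq_natDegree hg0, hdeg]

lemma coeff_zero_leadingForm [CommRing R] {f : MvPolynomial σ R} (hf : 0 < f.totalDegree) :
    (leadingForm f).coeff 0 = 0 := by
  rw [leadingForm, coeff_homogeneousComponent, if_neg (by simp [hf.ne])]

lemma totalDegree_sub_leadingForm_lt [CommRing R] {f : MvPolynomial σ R}
    (hf : 0 < f.totalDegree) : (f - leadingForm f).totalDegree < f.totalDegree := by
  have hf0 : f ≠ 0 := by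
    rintro rfl
    exact hf.ne' totalDegree_zero
  rw [← totalDegree_leadingForm hf0] at hf ⊢
  exact totalDegree_sub_lt_of_leadingForm_eq hf (totalDegree_leadingForm hf0).symm
    (leadingForm_of_isHomogeneous (isHomogeneous_leadingForm f)).symm

section DegLex

open MonomialOrder

variable [CommSemiring R] [LinearOrder σ] [WellFoundedGT σ]

lemma coeff_leadingForm_degree (f : MvPolynomial σ R) :
    (leadingForm f).coeff (degLex.degree f) = degLex.leadingCoeff f := by
  rw [leadingForm, coeff_homogeneousComponent, if_pos degree_degLexDegree]
  rfl

lemma degree_leadingForm (f : MvPolynomial σ R) :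
    degLex.degree (leadingForm f) = degLex.degree f := by
  rcases eq_or_ne f 0 with rfl | hf
  · rw [leadingForm, map_zero]
  refine degLex.toSyn.injective (le_antisymm ?_ ?_)
  · exact degree_le_degree_of_support_subset (support_leadingForm_subset f)
  · refine degLex.le_degree (mem_support_iff.mpr ?_)
    rw [coeff_leadingForm_degree]
    exact degLex.leadingCoeff_ne_zero_iff.mpr hf

lemma leadingCoeff_leadingForm (f : MvPolynomial σ R) :
    degLex.leadingCoeff (leadingForm f) = degLex.leadingCoeff f := by
  rw [MonomialOrder.leadingCoeff, degree_leadingForm, coeff_leadingForm_degree]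

lemma degLexKey_le_iff {r : ℕ} (a b : Fin r →₀ ℕ) :
    degLexKey a ≤ degLexKey b ↔ a ≼[degLex] b := by
  rw [degLex_le_iff, Finsupp.DegLex.le_iff, degLexKey, degLexKey, Prod.Lex.toLex_le_toLex]
  rfl

lemma mvMonic_iff_monic {r : ℕ} [Nontrivial R] (f : MvPolynomial (Fin r) R) :
    MvMonic f ↔ degLex.Monic f := by
  constructor
  · rintro ⟨m, hm, hmax, hcoeff⟩
    have degree_eq : degLex.degree f = m :=
      degLex.toSyn.injective <| le_antisymm
        ((degLexKey_le_iff _ _).mp (hmax _ (degree_mem_support (ne_zero_iff.mpr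
          ⟨m, mem_support_iff.mp hm⟩))))
        (degLex.le_degree hm)
    rwa [Monic, MonomialOrder.leadingCoeff, degree_eq]
  · intro hf
    exact ⟨degLex.degree f, degree_mem_support hf.ne_zero,
      fun m' hm' => (degLexKey_le_iff _ _).mpr (degLex.le_degree hm'), hf⟩

end DegLex

section ProperPowerForm

open MonomialOrder

variable {F : Type*} [Field F]

lemma eq_of_associated_of_monic (o : MonomialOrder σ) {f g : MvPolynomial σ F} (hf : o.Monic f)
    (hg : o.Monic g) (h : Associated f g) : f = g := by
  obtain ⟨u, hu⟩ := h
  obtain ⟨c, -, hc⟩ := isUnit_iff_eq_C_of_isReduced.mp u.isUnit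
  have hc1 : c = 1 := by
    have lead := congrArg o.leadingCoeff hu
    rwa [hc, leadingCoeff_mul, leadingCoeff_C, hf.leadingCoeff_eq_one, hg.leadingCoeff_eq_one,
      one_mul] at lead
  rw [← hu, hc, hc1, C_1, mul_one]

lemma monic_inv_leadingCoeff_smul (o : MonomialOrder σ) {f : MvPolynomial σ F} (hf : f ≠ 0) :
    o.Monic ((o.leadingCoeff f)⁻¹ • f) := by
  rw [smul_eq_C_mul, Monic, leadingCoeff_mul, leadingCoeff_C,
    inv_mul_cancel₀ (o.leadingCoeff_ne_zero_iff.mpr hf)]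

lemma exists_monic_associated (o : MonomialOrder σ) {f : MvPolynomial σ F} (hf : f ≠ 0) :
    ∃ g, o.Monic g ∧ Associated g f := by
  refine ⟨_, monic_inv_leadingCoeff_smul o hf, ?_⟩
  rw [smul_eq_C_mul]
  exact associated_unit_mul_left f _
    ((IsUnit.mk0 _ (inv_ne_zero (o.leadingCoeff_ne_zero_iff.mpr hf))).map C)

variable [LinearOrder σ] [WellFoundedGT σ]

lemma exists_monic_form_pow_eq_of_isProperPower {f : MvPolynomial σ F} {d : ℕ}
    (hf : f.IsHomogeneous d) (hmonic : degLex.Monic f) (hpow : IsProperPower f) :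
    ∃ t ≥ 2, ∃ i, ∃ u : MvPolynomial σ F,
      i * t = d ∧ u.IsHomogeneous i ∧ degLex.Monic u ∧ u ^ t = f := by
  obtain ⟨t, ht, v, hv⟩ := hpow
  have hv0 : v ≠ 0 := by
    rintro rfl
    rw [zero_pow (by lia)] at hv
    exact hmonic.ne_zero (hv.eq_zero_iff.mp rfl)
  obtain ⟨w, hw, hwv⟩ := exists_monic_associated degLex hv0
  have w_pow : w ^ t = f :=
    eq_of_associated_of_monic degLex hw.pow hmonic ((hwv.pow_pow (n := t)).trans hv)
  have u_pow : leadingForm w ^ t = f := by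
    rw [← leadingForm_pow, w_pow, leadingForm_of_isHomogeneous hf]
  refine ⟨t, ht, w.totalDegree, leadingForm w, ?_, isHomogeneous_leadingForm w, ?_, u_pow⟩
  · refine IsHomogeneous.inj_right ?_ hf hmonic.ne_zero
    rw [← u_pow]
    exact (isHomogeneous_leadingForm w).pow t
  · rwa [Monic, leadingCoeff_leadingForm]

end ProperPowerForm

end LeadingForm

section Composition

open MonomialOrder
open scoped Polynomial

variable {σ F : Type*} [Field F]

lemma gradingHom_aeval (g : F[X]) (h : MvPolynomial σ F) :
    gradingHom σ F (Polynomial.aeval h g) = Polynomial.aeval (gradingHom σ F h) g :=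
  (Polynomial.aeval_algHom_apply _ _ _).symm

lemma totalDegree_aeval (g : F[X]) (h : MvPolynomial σ F) :
    (Polynomial.aeval h g).totalDegree = g.natDegree * h.totalDegree := by
  rw [← natDegree_gradingHom, gradingHom_aeval, natDegree_aeval_polynomial, natDegree_gradingHom]

lemma leadingForm_aeval (g : F[X]) {h : MvPolynomial σ F} (hh : h.totalDegree ≠ 0) :
    leadingForm (Polynomial.aeval h g) = C g.leadingCoeff * leadingForm h ^ g.natDegree := by
  rw [← leadingCoeff_gradingHom, gradingHom_aeval, leadingCoeff_aeval_polynomial,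
    leadingCoeff_gradingHom]
  · rfl
  · rwa [natDegree_gradingHom]

lemma coeff_zero_aeval (g : F[X]) {h : MvPolynomial σ F} (hh : h.coeff 0 = 0) :
    (Polynomial.aeval h g).coeff 0 = g.coeff 0 := by
  rw [← constantCoeff_eq] at hh ⊢
  rw [Polynomial.aeval_def, Polynomial.hom_eval₂, hh, Polynomial.eval₂_at_zero]
  exact constantCoeff_C _ _

lemma aeval_injective {h : MvPolynomial σ F} (hh : 0 < h.totalDegree) :
    Function.Injective (Polynomial.aeval h : F[X] → MvPolynomial σ F) := by
  refine (injective_iff_map_eq_zero _).mpr fun g hg => ?_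
  have hdeg : g.natDegree = 0 := by
    have := totalDegree_aeval g h
    rw [hg, totalDegree_zero] at this
    exact (Nat.mul_eq_zero.mp this.symm).resolve_right hh.ne'
  rw [Polynomial.eq_C_of_natDegree_eq_zero hdeg, Polynomial.aeval_C, algebraMap_eq,
    C_eq_zero] at hg
  rw [Polynomial.eq_C_of_natDegree_eq_zero hdeg, hg, Polynomial.C_0]

variable [LinearOrder σ] [WellFoundedGT σ]

lemma leadingCoeff_aeval (g : F[X]) {h : MvPolynomial σ F} (hh : h.totalDegree ≠ 0) :
    degLex.leadingCoeff (Polynomial.aeval h g) =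
      g.leadingCoeff * degLex.leadingCoeff h ^ g.natDegree := by
  rw [← leadingCoeff_leadingForm, leadingForm_aeval g hh, leadingCoeff_mul, leadingCoeff_C,
    leadingCoeff_pow, leadingCoeff_leadingForm]

/-- The monic polynomials of total degree `d` with vanishing constant term (the *monic original*
polynomials). They serve as the right components of decompositions. -/
def monicOriginals (σ F : Type*) [Field F] [LinearOrder σ] [WellFoundedGT σ] (d : ℕ) :
    Set (MvPolynomial σ F) :=
  {h | h.totalDegree = d ∧ degLex.Monic h ∧ h.coeff 0 = 0}

/-- The univariate monic original polynomials of degree `d`, the left components of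
decompositions. -/
def univariateMonicOriginals (F : Type*) [Field F] (d : ℕ) : Set F[X] :=
  {g | g.Monic ∧ g.natDegree = d ∧ g.coeff 0 = 0}

lemma aeval_mem_monicOriginals {d j : ℕ} (hj : 0 < j) {g : F[X]}
    (hg : g ∈ univariateMonicOriginals F d) {h : MvPolynomial σ F}
    (hh : h ∈ monicOriginals σ F j) :
    Polynomial.aeval h g ∈ monicOriginals σ F (d * j) := by
  obtain ⟨g_monic, g_deg, g_zero⟩ := hg
  obtain ⟨h_deg, h_monic, h_zero⟩ := hh
  refine ⟨?_, ?_, ?_⟩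
  · rw [totalDegree_aeval, g_deg, h_deg]
  · rw [Monic, leadingCoeff_aeval g (by lia), g_monic.leadingCoeff, h_monic.leadingCoeff_eq_one,
      one_pow, one_mul]
  · rw [coeff_zero_aeval g h_zero, g_zero]

lemma leadingForm_eq_of_aeval_eq_aeval {d j : ℕ} (hd : d ≠ 0) (hj : 0 < j) {g₁ g₂ : F[X]}
    (hg₁ : g₁ ∈ univariateMonicOriginals F d) (hg₂ : g₂ ∈ univariateMonicOriginals F d)
    {h₁ h₂ : MvPolynomial σ F} (hh₁ : h₁ ∈ monicOriginals σ F j)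
    (hh₂ : h₂ ∈ monicOriginals σ F j)
    (heq : Polynomial.aeval h₁ g₁ = Polynomial.aeval h₂ g₂) :
    leadingForm h₁ = leadingForm h₂ := by
  have powers := congrArg leadingForm heq
  rw [leadingForm_aeval g₁ (hh₁.1.trans_ne hj.ne'), leadingForm_aeval g₂ (hh₂.1.trans_ne hj.ne'),
    hg₁.1.leadingCoeff, hg₂.1.leadingCoeff, hg₁.2.1, hg₂.2.1, C_1, one_mul, one_mul] at powers
  refine eq_of_associated_of_monic degLex ?_ ?_
    (associated_of_associated_pow hd (Associated.of_eq powers))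
  · rw [Monic, leadingCoeff_leadingForm, hh₁.2.1.leadingCoeff_eq_one]
  · rw [Monic, leadingCoeff_leadingForm, hh₂.2.1.leadingCoeff_eq_one]

lemma right_component_unique {l j : ℕ} (hl : l.Prime) (hj : 0 < j) {g₁ g₂ : F[X]}
    (hg₁ : g₁ ∈ univariateMonicOriginals F l) (hg₂ : g₂ ∈ univariateMonicOriginals F l)
    {h₁ h₂ : MvPolynomial σ F} (hh₁ : h₁ ∈ monicOriginals σ F j)
    (hh₂ : h₂ ∈ monicOriginals σ F j) (hpow : ¬ IsProperPower (leadingForm h₁))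
    (heq : Polynomial.aeval h₁ g₁ = Polynomial.aeval h₂ g₂) : h₁ = h₂ := by
  have hlead := leadingForm_eq_of_aeval_eq_aeval hl.ne_zero hj hg₁ hg₂ hh₁ hh₂ heq
  have hlt : (h₂ - h₁).totalDegree < h₁.totalDegree :=
    totalDegree_sub_lt_of_leadingForm_eq (hj.trans_eq hh₁.1.symm) (hh₂.1.trans hh₁.1.symm)
      hlead.symm
  rcases Nat.eq_zero_or_pos (h₂ - h₁).totalDegree with hzero | hpos
  · refine (sub_eq_zero.mp (eq_zero_of_totalDegree_eq_zero hzero ?_)).symm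
    rw [coeff_sub, hh₁.2.2, hh₂.2.2, sub_zero]
  rw [← natDegree_gradingHom] at hpos
  rw [← natDegree_gradingHom (h₂ - h₁), ← natDegree_gradingHom h₁] at hlt
  have collision : Polynomial.aeval (gradingHom σ F h₁) g₁ =
      Polynomial.aeval (gradingHom σ F h₁ + gradingHom σ F (h₂ - h₁)) g₂ := by
    rw [← map_add, add_sub_cancel, ← gradingHom_aeval, ← gradingHom_aeval, heq]
  obtain ⟨A, B, hA, hAB, hassoc⟩ := exists_associated_leadingCoeff_pow_of_collision hg₂.1
    (hg₂.2.1.symm ▸ hl) hlt hpos collision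
  rw [leadingCoeff_gradingHom h₁] at hassoc
  exact absurd (isProperPower_of_associated_pow (leadingForm_ne_zero hh₁.2.1.ne_zero) hA hAB
    hassoc) hpow

theorem injOn_aeval_of_prime {l j : ℕ} (hl : l.Prime) (hj : 0 < j) :
    Set.InjOn (fun p : F[X] × MvPolynomial σ F => Polynomial.aeval p.2 p.1)
      (univariateMonicOriginals F l ×ˢ
        {h ∈ monicOriginals σ F j | ¬ IsProperPower (leadingForm h)}) := by
  rintro ⟨g₁, h₁⟩ ⟨hg₁, hh₁, hpow⟩ ⟨g₂, h₂⟩ ⟨hg₂, hh₂, -⟩ heq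
  obtain rfl : h₁ = h₂ := right_component_unique hl hj hg₁ hg₂ hh₁ hh₂ hpow heq
  exact Prod.ext (aeval_injective (hj.trans_eq hh₁.1.symm) heq) rfl

lemma leadingForm_eq_self_of_linear {h : MvPolynomial σ F} (hh : h ∈ monicOriginals σ F 1) :
    leadingForm h = h := by
  refine (sub_eq_zero.mp (eq_zero_of_totalDegree_eq_zero ?_ ?_)).symm
  · have := totalDegree_sub_leadingForm_lt (f := h) (by rw [hh.1]; exact one_pos)
    rw [hh.1] at this
    lia
  · rw [coeff_sub, hh.2.2, coeff_zero_leadingForm (one_pos.trans_eq hh.1.symm), sub_zero]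

theorem injOn_aeval_linear {d : ℕ} (hd : d ≠ 0) :
    Set.InjOn (fun p : F[X] × MvPolynomial σ F => Polynomial.aeval p.2 p.1)
      (univariateMonicOriginals F d ×ˢ monicOriginals σ F 1) := by
  rintro ⟨g₁, h₁⟩ ⟨hg₁, hh₁⟩ ⟨g₂, h₂⟩ ⟨hg₂, hh₂⟩ heq
  have hlead := leadingForm_eq_of_aeval_eq_aeval hd one_pos hg₁ hg₂ hh₁ hh₂ heq
  obtain rfl : h₁ = h₂ := (leadingForm_eq_self_of_linear hh₁).symm.trans
    (hlead.trans (leadingForm_eq_self_of_linear hh₂))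
  exact Prod.ext (aeval_injective (one_pos.trans_eq hh₁.1.symm) heq) rfl

end Composition

section Exponents

lemma ncard_degree_eq {r : ℕ} (hr : 1 ≤ r) (d : ℕ) :
    {m : Fin r →₀ ℕ | m.degree = d}.ncard = Nat.choose (r - 1 + d) (r - 1) := by
  have h : {m : Fin r →₀ ℕ | m.degree = d} =
      Finset.finsuppAntidiag (Finset.univ : Finset (Fin r)) d := by
    ext m
    simp [Finset.mem_finsuppAntidiag, Finsupp.degree_eq_sum]
  rw [h, Set.ncard_coe_finset, Finset.card_finsuppAntidiag_nat_eq_choose, Finset.card_univ,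
    Fintype.card_fin, Nat.sub_add_comm hr, Nat.choose_symm_add]

lemma choose_add_succ {r : ℕ} (hr : 1 ≤ r) (d : ℕ) :
    Nat.choose (r + (d + 1)) r = Nat.choose (r + d) r + Nat.choose (r - 1 + (d + 1)) (r - 1) := by
  obtain ⟨s, rfl⟩ := Nat.exists_eq_add_of_le' hr
  rw [← add_assoc, Nat.choose_succ_succ, add_comm, Nat.add_sub_cancel, add_right_comm, add_assoc s]

lemma ncard_degree_le {r : ℕ} (hr : 1 ≤ r) (d : ℕ) :
    {m : Fin r →₀ ℕ | m.degree ≤ d}.ncard = Nat.choose (r + d) r := by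
  induction d with
  | zero => simp [Finsupp.degree_eq_zero_iff]
  | succ d ih =>
    have split : {m : Fin r →₀ ℕ | m.degree ≤ d + 1} =
        {m | m.degree ≤ d} ∪ {m | m.degree = d + 1} := by
      ext m
      simp only [Set.mem_ofPred_eq, Set.mem_union]
      lia
    rw [split, Set.ncard_union_eq ?_ (Finsupp.finite_of_degree_le d)
      (Finsupp.finite_of_degree_eq _), ih, ncard_degree_eq hr, choose_add_succ hr]
    exact Set.disjoint_left.mpr fun m hle heq => by simp_all

lemma ncard_degree_mem_Icc {r : ℕ} (hr : 1 ≤ r) (d : ℕ) :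
    {m : Fin r →₀ ℕ | m.degree ∈ Set.Icc 1 d}.ncard = Nat.choose (r + d) r - 1 := by
  have h : {m : Fin r →₀ ℕ | m.degree ∈ Set.Icc 1 d} = {m | m.degree ≤ d} \ {0} := by
    ext m
    simp [Nat.one_le_iff_ne_zero, Finsupp.degree_eq_zero_iff, and_comm]
  rw [h, Set.ncard_sdiff_singleton_of_mem (by simp), ncard_degree_le hr]

end Exponents

section Counting

open MonomialOrder
open scoped Polynomial

variable {σ F : Type*} [Field F]

lemma natCard_restrictSupport {s : Set (σ →₀ ℕ)} (hs : s.Finite) :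
    Nat.card (restrictSupport F s) = Nat.card F ^ s.ncard := by
  have := hs.to_subtype
  have := Module.Finite.of_basis (basisRestrictSupport F s)
  rw [Module.natCard_eq_pow_finrank (K := F),
    Module.finrank_eq_nat_card_basis (basisRestrictSupport F s), Nat.card_coe_set_eq]

lemma finite_restrictSupport [Finite F] {s : Set (σ →₀ ℕ)} (hs : s.Finite) :
    (restrictSupport F s : Set (MvPolynomial σ F)).Finite := by
  have := hs.to_subtype
  have := Module.Finite.of_basis (basisRestrictSupport F s)
  exact Set.finite_coe_iff.mp (Module.finite_of_finite F)

lemma ncard_monic_mem_submodule (o : MonomialOrder σ) (V : Submodule F (MvPolynomial σ F))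
    [Finite V] :
    (Nat.card F - 1) * {f | f ∈ V ∧ o.Monic f}.ncard + 1 = Nat.card V := by
  let line (f : {f | f ∈ V ∧ o.Monic f}) : Projectivization F V :=
    .mk F ⟨f.1, f.2.1⟩ (Subtype.coe_ne_coe.mp f.2.2.ne_zero)
  have bijective : Function.Bijective line := by
    refine ⟨fun f g hfg => ?_, fun p => ?_⟩
    · obtain ⟨a, ha⟩ := (Projectivization.mk_eq_mk_iff ..).mp hfg
      have ha : C (a : F) * g.1 = f.1 := (C_mul' ..).trans (congrArg Subtype.val ha)
      refine Subtype.ext (eq_of_associated_of_monic o f.2.2 g.2.2 ?_)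
      rw [← ha]
      exact associated_unit_mul_left _ _ (a.isUnit.map C)
    · induction p with | h v hv =>
      exact ⟨⟨_, V.smul_mem _ v.2, monic_inv_leadingCoeff_smul o (Subtype.coe_ne_coe.mpr hv)⟩,
        (Projectivization.mk_eq_mk_iff' ..).mpr ⟨_, rfl⟩⟩
  rw [Projectivization.card' F V, ← Nat.card_coe_set_eq, Nat.card_congr (.ofBijective _ bijective),
    mul_comm]

lemma mem_restrictSupport_degree_Icc {d : ℕ} {f : MvPolynomial σ F} :
    f ∈ restrictSupport F {m | m.degree ∈ Set.Icc 1 d} ↔ f.totalDegree ≤ d ∧ f.coeff 0 = 0 := by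
  rw [mem_restrictSupport_iff, totalDegree, Finset.sup_le_iff, ← notMem_support_iff]
  simp only [Set.subset_def, Finset.mem_coe, Set.mem_ofPred_eq, Set.mem_Icc,
    Nat.one_le_iff_ne_zero, ne_eq, Finsupp.degree_eq_zero_iff]
  exact ⟨fun h => ⟨fun m hm => (h m hm).2, fun h0 => (h 0 h0).1 rfl⟩,
    fun h m hm => ⟨fun hm0 => h.2 (hm0 ▸ hm), h.1 m hm⟩⟩

lemma ncard_univariateMonicOriginals {d : ℕ} (hd : 0 < d) :
    (univariateMonicOriginals F d).ncard = Nat.card F ^ (d - 1) := by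
  have h : univariateMonicOriginals F d =
      (Polynomial.X * ·) '' {g : F[X] | g.Monic ∧ g.natDegree = d - 1} := by
    ext g
    constructor
    · rintro ⟨g_monic, g_deg, g_zero⟩
      obtain ⟨u, rfl⟩ := Polynomial.X_dvd_iff.mpr g_zero
      have u_monic := Polynomial.monic_X.of_mul_monic_left g_monic
      refine ⟨u, ⟨u_monic, ?_⟩, rfl⟩
      rw [Polynomial.natDegree_X_mul u_monic.ne_zero] at g_deg
      lia
    · rintro ⟨u, ⟨u_monic, u_deg⟩, rfl⟩
      refine ⟨Polynomial.monic_X.mul u_monic, ?_, Polynomial.coeff_X_mul_zero u⟩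
      rw [Polynomial.natDegree_X_mul u_monic.ne_zero]
      lia
  rw [h, Set.ncard_image_of_injective _ (mul_right_injective₀ Polynomial.X_ne_zero),
    ← Nat.card_coe_set_eq]
  refine (Nat.card_congr ((Polynomial.monicEquivDegreeLT (d - 1)).trans
    (Polynomial.degreeLTEquiv F (d - 1)).toEquiv)).trans ?_
  rw [Nat.card_fun, Nat.card_fin]

section FiniteField

variable [Finite F] {r : ℕ}

/-- The monic forms of degree `i`. They are the roots of the leading forms that are proper
powers. -/
def monicForms (σ F : Type*) [Field F] [LinearOrder σ] [WellFoundedGT σ] (i : ℕ) :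
    Set (MvPolynomial σ F) :=
  {u | u.IsHomogeneous i ∧ degLex.Monic u}

lemma ncard_monicForms (hr : 1 ≤ r) (i : ℕ) :
    (Nat.card F - 1) * (monicForms (Fin r) F i).ncard + 1 =
      Nat.card F ^ Nat.choose (r - 1 + i) (r - 1) := by
  have hfin := Finsupp.finite_of_degree_eq (σ := Fin r) i
  have := (finite_restrictSupport (F := F) hfin).to_subtype
  rw [← ncard_degree_eq hr, ← natCard_restrictSupport hfin,
    ← ncard_monic_mem_submodule degLex (restrictSupport F {m : Fin r →₀ ℕ | m.degree = i})]
  rw [restrictSupport, ← homogeneousSubmodule_eq_finsupp_supported]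
  rfl

lemma finite_degree_mem_Icc (d : ℕ) : {m : Fin r →₀ ℕ | m.degree ∈ Set.Icc 1 d}.Finite :=
  (Finsupp.finite_of_degree_le d).subset fun _ hm => hm.2

lemma ncard_monicOriginals (hr : 1 ≤ r) {d : ℕ} (hd : 0 < d) :
    (Nat.card F - 1) * (monicOriginals (Fin r) F d).ncard +
        Nat.card F ^ (Nat.choose (r + (d - 1)) r - 1) =
      Nat.card F ^ (Nat.choose (r + d) r - 1) := by
  let monics (e : ℕ) := {f | f ∈ restrictSupport F {m : Fin r →₀ ℕ | m.degree ∈ Set.Icc 1 e} ∧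
    degLex.Monic f}
  have hfin (e) := finite_restrictSupport (F := F) (finite_degree_mem_Icc (r := r) e)
  have card_monics (e) : (Nat.card F - 1) * (monics e).ncard + 1 =
      Nat.card F ^ (Nat.choose (r + e) r - 1) := by
    have := (hfin e).to_subtype
    rw [← ncard_degree_mem_Icc hr, ← natCard_restrictSupport (finite_degree_mem_Icc e),
      ncard_monic_mem_submodule]
  have hsub : monics (d - 1) ⊆ monics d := fun f hf =>
    ⟨restrictSupport_mono F (fun m (hm : m.degree ∈ Set.Icc 1 (d - 1)) =>
      Set.Icc_subset_Icc_right (Nat.sub_le d 1) hm) hf.1, hf.2⟩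
  have hdiff : monicOriginals (Fin r) F d = monics d \ monics (d - 1) := by
    ext f
    simp only [monicOriginals, monics, Set.mem_sdiff, Set.mem_ofPred_eq,
      mem_restrictSupport_degree_Icc]
    grind
  have hcard := Set.ncard_sdiff_add_ncard_of_subset hsub ((hfin d).subset fun _ hf => hf.1)
  rw [← card_monics, ← card_monics, hdiff, ← hcard, mul_add, add_assoc]

lemma finite_monicForms (i : ℕ) : (monicForms (Fin r) F i).Finite := by
  refine (finite_restrictSupport (F := F) (Finsupp.finite_of_degree_eq (σ := Fin r) i)).subset ?_
  rw [restrictSupport, ← homogeneousSubmodule_eq_finsupp_supported]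
  exact fun u hu => hu.1

lemma finite_monicOriginals (d : ℕ) : (monicOriginals (Fin r) F d).Finite :=
  (finite_restrictSupport (F := F) (finite_degree_mem_Icc d)).subset fun _ hf =>
    mem_restrictSupport_degree_Icc.mpr ⟨hf.1.le, hf.2.2⟩

lemma ncard_monicForms_isProperPower_le {d : ℕ} (hd : 0 < d) :
    {u ∈ monicForms (Fin r) F d | IsProperPower u}.ncard ≤
      ∑ i ∈ Finset.Icc 1 (d / 2), (monicForms (Fin r) F i).ncard := by
  have hsub : {u ∈ monicForms (Fin r) F d | IsProperPower u} ⊆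
      ⋃ i ∈ Finset.Icc 1 (d / 2), (· ^ (d / i)) '' monicForms (Fin r) F i := by
    rintro _ ⟨⟨hhom, hmonic⟩, hpow⟩
    obtain ⟨t, ht, i, u, rfl, hu, hu_monic, rfl⟩ :=
      exists_monic_form_pow_eq_of_isProperPower hhom hmonic hpow
    have hi : 0 < i := Nat.pos_of_mul_pos_right hd
    refine Set.mem_iUnion₂.mpr ⟨i, Finset.mem_Icc.mpr ⟨hi, ?_⟩, u, ⟨hu, hu_monic⟩, ?_⟩
    · exact (Nat.le_div_iff_mul_le two_pos).mpr (Nat.mul_le_mul_left i ht)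
    · simp only [Nat.mul_div_cancel_left t hi]
  calc _ ≤ _ := Set.ncard_le_ncard hsub <| (Finset.finite_toSet _).biUnion
        fun i _ => (finite_monicForms i).image _
    _ ≤ _ := Finset.set_ncard_biUnion_le _ _
    _ ≤ _ := Finset.sum_le_sum fun i _ => Set.ncard_image_le (finite_monicForms i)

lemma ncard_isProperPower_leadingForm_le (hr : 1 ≤ r) {d : ℕ} (hd : 0 < d) :
    {h ∈ monicOriginals (Fin r) F d | IsProperPower (leadingForm h)}.ncard ≤
      (∑ i ∈ Finset.Icc 1 (d / 2), (monicForms (Fin r) F i).ncard) *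
        Nat.card F ^ (Nat.choose (r + (d - 1)) r - 1) := by
  let lower := restrictSupport F {m : Fin r →₀ ℕ | m.degree ∈ Set.Icc 1 (d - 1)}
  let split (h : MvPolynomial (Fin r) F) := (leadingForm h, h - leadingForm h)
  have hfin : {u ∈ monicForms (Fin r) F d | IsProperPower u}.Finite :=
    (finite_monicForms d).subset fun u hu => hu.1
  have hlower : (lower : Set (MvPolynomial (Fin r) F)).Finite :=
    finite_restrictSupport (finite_degree_mem_Icc _)
  have hmaps : split '' {h ∈ monicOriginals (Fin r) F d | IsProperPower (leadingForm h)} ⊆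
      {u ∈ monicForms (Fin r) F d | IsProperPower u} ×ˢ lower := by
    rintro _ ⟨h, ⟨⟨rfl, h_monic, h_zero⟩, hpow⟩, rfl⟩
    refine ⟨⟨⟨isHomogeneous_leadingForm h, ?_⟩, hpow⟩, mem_restrictSupport_degree_Icc.mpr ⟨?_, ?_⟩⟩
    · rwa [Monic, leadingCoeff_leadingForm]
    · exact Nat.le_sub_one_of_lt (totalDegree_sub_leadingForm_lt hd)
    · rw [coeff_sub, h_zero, coeff_zero_leadingForm hd, sub_zero]
  have hinj : Function.Injective split := fun h₁ h₂ heq => by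
    simpa [split] using congrArg (fun p => p.1 + p.2) heq
  calc _ = _ := (Set.ncard_image_of_injective _ hinj).symm
    _ ≤ _ := Set.ncard_le_ncard hmaps (hfin.prod hlower)
    _ = _ := Set.ncard_prod
    _ ≤ _ := Nat.mul_le_mul_right _ (ncard_monicForms_isProperPower_le hd)
    _ = _ := by
        rw [← ncard_degree_mem_Icc hr, ← natCard_restrictSupport (finite_degree_mem_Icc _),
          ← Nat.card_coe_set_eq]
        rfl

end FiniteField

end Counting

section Decomposable

open MonomialOrder
open scoped Polynomial

section

variable {σ F : Type*} [Field F] [LinearOrder σ] [WellFoundedGT σ]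

/-- The decomposable monic original polynomials of total degree `n`, the set `D_{r,n}(F)` of the
paper. -/
def decomposables (σ F : Type*) [Field F] [LinearOrder σ] [WellFoundedGT σ] (n : ℕ) :
    Set (MvPolynomial σ F) :=
  {f ∈ monicOriginals σ F n | ∃ (g : F[X]) (h : MvPolynomial σ F),
    2 ≤ g.natDegree ∧ 0 < h.totalDegree ∧ f = Polynomial.aeval h g}

lemma exists_monicOriginal_of_pos_totalDegree {h : MvPolynomial σ F} (hh : 0 < h.totalDegree) :
    ∃ h' ∈ monicOriginals σ F h.totalDegree, ∃ p : F[X],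
      p.natDegree = 1 ∧ Polynomial.aeval h' p = h := by
  have hc : degLex.leadingCoeff h ≠ 0 := degLex.leadingCoeff_ne_zero_iff.mpr <| by
    rintro rfl
    simp at hh
  let p := Polynomial.C (degLex.leadingCoeff h)⁻¹ *
    (Polynomial.X - Polynomial.C (h.coeff 0))
  have p_natDegree : p.natDegree = 1 := by
    rw [Polynomial.natDegree_C_mul (inv_ne_zero hc), Polynomial.natDegree_X_sub_C]
  have p_lead : p.leadingCoeff = (degLex.leadingCoeff h)⁻¹ := by
    rw [Polynomial.leadingCoeff_mul, Polynomial.leadingCoeff_C, Polynomial.leadingCoeff_X_sub_C,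
      mul_one]
  refine ⟨Polynomial.aeval h p, ⟨?_, ?_, ?_⟩,
    Polynomial.C (degLex.leadingCoeff h) * Polynomial.X + Polynomial.C (h.coeff 0),
    Polynomial.natDegree_linear hc, ?_⟩
  · rw [totalDegree_aeval, p_natDegree, one_mul]
  · rw [Monic, leadingCoeff_aeval p hh.ne', p_natDegree, p_lead, pow_one, inv_mul_cancel₀ hc]
  · simp [p]
  · simp only [p, map_add, map_sub, map_mul, Polynomial.aeval_X, Polynomial.aeval_C, algebraMap_eq]
    rw [← mul_assoc, ← C_mul, mul_inv_cancel₀ hc, C_1, one_mul, sub_add_cancel]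

lemma exists_normalized_of_mem_decomposables {n : ℕ} (hn : n ≠ 0) {f : MvPolynomial σ F}
    (hf : f ∈ decomposables σ F n) :
    ∃ d ∈ n.divisors.erase 1, ∃ g ∈ univariateMonicOriginals F d,
      ∃ h ∈ monicOriginals σ F (n / d), Polynomial.aeval h g = f := by
  obtain ⟨⟨f_deg, f_monic, f_zero⟩, g, h, hg, hh, rfl⟩ := hf
  obtain ⟨h', hh', p, hp, rfl⟩ := exists_monicOriginal_of_pos_totalDegree hh
  have natDegree_comp : (g.comp p).natDegree = g.natDegree := by
    rw [Polynomial.natDegree_comp, hp, mul_one]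
  rw [← Polynomial.aeval_comp] at f_deg f_monic f_zero ⊢
  have h'_pos : 0 < h'.totalDegree := hh'.1.symm ▸ hh
  have hdeg : g.natDegree * h'.totalDegree = n := by
    rw [← f_deg, totalDegree_aeval, natDegree_comp]
  refine ⟨g.natDegree, ?_, g.comp p, ⟨?_, natDegree_comp, ?_⟩, h', ⟨?_, hh'.2⟩, rfl⟩
  · exact Finset.mem_erase.mpr ⟨by lia, Nat.mem_divisors.mpr ⟨⟨_, hdeg.symm⟩, hn⟩⟩
  · rwa [Monic, leadingCoeff_aeval _ h'_pos.ne', hh'.2.1.leadingCoeff_eq_one, one_pow,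
      mul_one] at f_monic
  · rwa [coeff_zero_aeval _ hh'.2.2] at f_zero
  · rw [← hdeg, Nat.mul_div_cancel_left _ (by lia)]

lemma pos_of_mem_divisors_erase {n d : ℕ} (hd : d ∈ n.divisors.erase 1) : 0 < d :=
  Nat.pos_of_mem_divisors (Finset.mem_of_mem_erase hd)

lemma aeval_mem_decomposables {n d : ℕ} (hd : d ∈ n.divisors.erase 1) {g : F[X]}
    (hg : g ∈ univariateMonicOriginals F d) {h : MvPolynomial σ F}
    (hh : h ∈ monicOriginals σ F (n / d)) : Polynomial.aeval h g ∈ decomposables σ F n := by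
  obtain ⟨hd1, hdn⟩ := Finset.mem_erase.mp hd
  have hj : 0 < n / d := Nat.div_pos (Nat.divisor_le hdn) (Nat.pos_of_mem_divisors hdn)
  refine ⟨?_, g, h, ?_, hj.trans_eq hh.1.symm, rfl⟩
  · simpa only [Nat.mul_div_cancel' (Nat.dvd_of_mem_divisors hdn)] using
      aeval_mem_monicOriginals hj hg hh
  · have := Nat.pos_of_mem_divisors hdn
    have := hg.2.1
    lia

end

lemma Dcount_eq_ncard_decomposables (F : Type) [Field F] (r n : ℕ) :
    Dcount F r n = (decomposables (Fin r) F n).ncard := by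
  simp only [Dcount, decomposables, monicOriginals, mvMonic_iff_monic, Set.mem_ofPred_eq,
    and_assoc]

variable {F : Type*} [Field F] [Finite F] {r n : ℕ}

lemma finite_decomposables : (decomposables (Fin r) F n).Finite :=
  (finite_monicOriginals n).subset fun _ hf => hf.1

lemma finite_univariateMonicOriginals {d : ℕ} (hd : 0 < d) :
    (univariateMonicOriginals F d).Finite :=
  Set.finite_of_ncard_ne_zero <| by
    rw [ncard_univariateMonicOriginals hd]
    exact pow_ne_zero _ Nat.card_pos.ne'

lemma ncard_decomposables_le (hn : n ≠ 0) :
    (decomposables (Fin r) F n).ncard ≤ ∑ d ∈ n.divisors.erase 1,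
      Nat.card F ^ (d - 1) * (monicOriginals (Fin r) F (n / d)).ncard := by
  let compose (p : F[X] × MvPolynomial (Fin r) F) := Polynomial.aeval p.2 p.1
  let components (d : ℕ) := univariateMonicOriginals F d ×ˢ monicOriginals (Fin r) F (n / d)
  have finite_components (d : ℕ) (hd : d ∈ n.divisors.erase 1) : (components d).Finite :=
    (finite_univariateMonicOriginals (pos_of_mem_divisors_erase hd)).prod (finite_monicOriginals _)
  calc (decomposables (Fin r) F n).ncard
      ≤ (⋃ d ∈ n.divisors.erase 1, compose '' components d).ncard := by
        refine Set.ncard_le_ncard (fun f hf => ?_)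
          ((n.divisors.erase 1).finite_toSet.biUnion fun d hd => (finite_components d hd).image _)
        obtain ⟨d, hd, g, hg, h, hh, hf⟩ := exists_normalized_of_mem_decomposables hn hf
        exact Set.mem_biUnion hd ⟨(g, h), ⟨hg, hh⟩, hf⟩
    _ ≤ ∑ d ∈ n.divisors.erase 1, (compose '' components d).ncard :=
        Finset.set_ncard_biUnion_le _ _
    _ ≤ ∑ d ∈ n.divisors.erase 1, (components d).ncard :=
        Finset.sum_le_sum fun d hd => Set.ncard_image_le (finite_components d hd)
    _ = _ := Finset.sum_congr rfl fun d hd => by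
        rw [Set.ncard_prod, ncard_univariateMonicOriginals (pos_of_mem_divisors_erase hd)]

lemma ncard_le_ncard_decomposables {d : ℕ} (hd : d ∈ n.divisors.erase 1)
    {S : Set (MvPolynomial (Fin r) F)} (hS : S ⊆ monicOriginals (Fin r) F (n / d))
    (hinj : Set.InjOn (fun p : F[X] × MvPolynomial (Fin r) F => Polynomial.aeval p.2 p.1)
      (univariateMonicOriginals F d ×ˢ S)) :
    Nat.card F ^ (d - 1) * S.ncard ≤ (decomposables (Fin r) F n).ncard := by
  have hd0 : 0 < d := pos_of_mem_divisors_erase hd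
  rw [← ncard_univariateMonicOriginals hd0, ← Set.ncard_prod, ← hinj.ncard_image]
  refine Set.ncard_le_ncard ?_ finite_decomposables
  rintro _ ⟨⟨g, h⟩, ⟨hg, hh⟩, rfl⟩
  exact aeval_mem_decomposables hd hg (hS hh)

end Decomposable

section BinomialInequalities

lemma choose_add_choose_le {s : ℕ} (hs : 1 ≤ s) (a b : ℕ) :
    (s + a).choose s + (s + b).choose s ≤ (s + (a + b)).choose s + 1 := by
  induction b with
  | zero => simp
  | succ b ih =>
    have mono : (s - 1 + (b + 1)).choose (s - 1) ≤ (s - 1 + (a + b + 1)).choose (s - 1) :=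
      Nat.choose_le_choose _ (by lia)
    rw [← add_assoc a, choose_add_succ hs, choose_add_succ hs]
    lia

lemma two_mul_choose_half_le {s : ℕ} (hs : 1 ≤ s) (k : ℕ) :
    2 * (s + k / 2).choose s ≤ (s + k).choose s + 1 :=
  calc 2 * (s + k / 2).choose s
      ≤ (s + (k / 2 + k / 2)).choose s + 1 := (two_mul _).trans_le (choose_add_choose_le hs _ _)
    _ ≤ (s + k).choose s + 1 := by gcongr; lia

lemma choose_add_sub_le {s : ℕ} (hs : 1 ≤ s) {i k : ℕ} (hik : i ≤ k) :
    (s + i).choose s + (k - i) ≤ (s + k).choose s := by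
  induction k, hik using Nat.le_induction with
  | base => simp
  | succ k hik ih =>
    have pos : 0 < (s - 1 + (k + 1)).choose (s - 1) := Nat.choose_pos (by lia)
    rw [choose_add_succ hs]
    lia

lemma three_le_choose_add {r j : ℕ} (hr : 2 ≤ r) (hj : 1 ≤ j) : 3 ≤ (r + j).choose r :=
  calc 3 ≤ (r + 1).choose r := by rw [Nat.choose_succ_self_right]; lia
    _ ≤ (r + j).choose r := by gcongr

lemma two_mul_choose_add_two (j : ℕ) : 2 * (2 + j).choose 2 = (j + 2) * (j + 1) := by
  rw [add_comm 2 j]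
  simpa [Nat.ascFactorial] using (Nat.ascFactorial_eq_factorial_mul_choose j 2).symm

lemma six_mul_choose_add_three (j : ℕ) :
    6 * (3 + j).choose 3 = (j + 3) * (j + 2) * (j + 1) := by
  rw [add_comm 3 j, mul_assoc]
  simpa [Nat.ascFactorial, Nat.factorial] using
    (Nat.ascFactorial_eq_factorial_mul_choose j 3).symm

lemma two_mul_choose_add_le_of_le {r s j k x y : ℕ} (hrs : r ≤ s) (hjk : j ≤ k)
    (h : 2 * (r + j).choose r + x ≤ (r + (k + 1)).choose r + (r + k).choose r + y) :
    2 * (s + j).choose s + x ≤ (s + (k + 1)).choose s + (s + k).choose s + y := by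
  induction s, hrs using Nat.le_induction with
  | base => exact h
  | succ s _ ih =>
    have pascal (i : ℕ) : (s + 1 + i).choose (s + 1) =
        (s + i).choose s + (s + i).choose (s + 1) := by
      rw [add_right_comm, Nat.choose_succ_succ]
    have mono_left : (s + j).choose (s + 1) ≤ (s + k).choose (s + 1) := by gcongr
    have mono_right : (s + k).choose (s + 1) ≤ (s + (k + 1)).choose (s + 1) := by gcongr; lia
    rw [pascal, pascal, pascal]
    lia

end BinomialInequalities

section ExponentGap

variable {r d j k l : ℕ}

lemma two_mul_le_of_not_exceptional (hl : l.Prime) (hlk : l ≤ k)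
    (hmin : ∀ p, p.Prime → p ∣ k → l ≤ p) (hex : ¬ (k.Prime ∧ k ≤ 2 * l - 5)) :
    2 * l ≤ k + 3 := by
  have := hl.two_le
  by_cases hk : k.Prime
  · rcases hk.eq_two_or_odd with hk2 | hk_odd
    · lia
    · have : ¬ k ≤ 2 * l - 5 := fun h => hex ⟨hk, h⟩
      lia
  · have hsq : l ^ 2 ≤ k := calc
      l ^ 2 ≤ k.minFac ^ 2 := Nat.pow_le_pow_left
        (hmin _ (Nat.minFac_prime (by lia)) k.minFac_dvd) 2
      _ ≤ k := Nat.minFac_sq_le_self (by lia) hk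
    nlinarith

lemma exponent_gap_two_of_two_le (hj : 2 ≤ j) (hjk : j + 2 ≤ k) (hlk : l ≤ k)
    (hjd : j * d = k * l) :
    (j + 2) * (j + 1) + 2 * d + 2 * j ≤ (k + 1) ^ 2 + 2 * l + 4 := by
  obtain ⟨i, rfl⟩ := Nat.exists_eq_add_of_le' hj
  obtain ⟨s, rfl⟩ := Nat.exists_eq_add_of_le' hjk
  refine le_of_mul_le_mul_left ?_ (show 0 < i + 2 by lia)
  have : (s + 2) * l ≤ (s + 2) * (s + (i + 2 + 2)) := Nat.mul_le_mul_left _ hlk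
  nlinarith [Nat.zero_le (s * i ^ 2), Nat.zero_le (s * i), Nat.zero_le (s ^ 2 * i)]

lemma exponent_gap_two (hl : l.Prime) (hlk : l ≤ k) (hmin : ∀ p, p.Prime → p ∣ k → l ≤ p)
    (hj : 0 < j) (hjk : j < k) (hjd : j * d = k * l) (h1 : j = 1 → 2 * l ≤ k + 3) :
    (j + 2) * (j + 1) + 2 * d + 2 * j ≤ (k + 1) ^ 2 + 2 * l + 4 := by
  rcases eq_or_lt_of_le (Nat.succ_le_of_lt hj) with rfl | hj2
  · obtain rfl : d = k * l := by lia
    have := h1 rfl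
    nlinarith
  rcases eq_or_lt_of_le (Nat.succ_le_of_lt hjk) with rfl | hjk2
  · obtain rfl : j = l := by
      have hdvd : j ∣ l := (show j.Coprime (j + 1) by simp).dvd_of_dvd_mul_left ⟨d, hjd.symm⟩
      exact ((Nat.dvd_prime hl).mp hdvd).resolve_left (by lia)
    obtain rfl : d = j + 1 := by
      exact Nat.eq_of_mul_eq_mul_left hj (hjd.trans (mul_comm _ _))
    rcases hl.eq_two_or_odd with rfl | hodd
    · norm_num
    · have := hmin 2 Nat.prime_two (by lia)
      lia
  · exact exponent_gap_two_of_two_le hj2 hjk2 hlk hjd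

/- Compares the powers of `q` counting the pairs for the divisors `d` and `l` of `n`, where `j` and
`k` are the cofactors. The inequality is doubled to clear the `1 / 2` in the exponent of `β`, and
the term `2 * j` gives the errors a geometric decay in `j`. -/
lemma exponent_gap (hr : 2 ≤ r) (hl : l.Prime) (hlk : l ≤ k)
    (hmin : ∀ p, p.Prime → p ∣ k → l ≤ p) (hex : ¬ (r = 2 ∧ k.Prime ∧ k ≤ 2 * l - 5))
    (hj : 0 < j) (hjk : j < k) (hjd : j * d = k * l) :
    2 * ((r + j).choose r + d + j) + (r - 1 + k).choose (r - 1) ≤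
      2 * ((r + k).choose r + l) + 4 := by
  obtain ⟨k, rfl⟩ := Nat.exists_eq_add_of_le' (show 1 ≤ k by lia)
  suffices 2 * (r + j).choose r + (2 * d + 2 * j) ≤
      (r + (k + 1)).choose r + (r + k).choose r + (2 * l + 4) by
    have := choose_add_succ (r := r) (by lia) k
    lia
  by_cases h1 : j = 1 → 2 * l ≤ k + 1 + 3
  · refine two_mul_choose_add_le_of_le hr (by lia) ?_
    have := exponent_gap_two hl hlk hmin hj hjk hjd h1
    have := two_mul_choose_add_two j
    have := two_mul_choose_add_two k
    have := two_mul_choose_add_two (k + 1)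
    nlinarith
  · have hr3 : 3 ≤ r := by
      refine lt_of_le_of_ne hr fun hr2 => h1 fun _ => ?_
      exact two_mul_le_of_not_exceptional hl hlk hmin fun h => hex ⟨hr2.symm, h⟩
    obtain rfl : j = 1 := (Classical.not_imp.mp h1).1
    refine two_mul_choose_add_le_of_le hr3 (by lia) ?_
    have := six_mul_choose_add_three 1
    have := six_mul_choose_add_three k
    have := six_mul_choose_add_three (k + 1)
    obtain rfl : d = (k + 1) * l := by lia
    have := hl.two_le
    have : k * l ≤ k * (k + 1) := Nat.mul_le_mul_left _ hlk
    nlinarith [Nat.zero_le (k ^ 3)]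

lemma exponent_gap_half (hr : 2 ≤ r) (hd : 0 < d) :
    2 * ((r - 1 + d / 2).choose (r - 1) - 1 + ((r + (d - 1)).choose r - 1) + 0) +
      (r - 1 + d).choose (r - 1) ≤ 2 * ((r + d).choose r + 1 - 3) + 2 := by
  obtain ⟨d, rfl⟩ := Nat.exists_eq_add_of_le' hd
  have := choose_add_succ (r := r) (by lia) d
  have := two_mul_choose_half_le (s := r - 1) (by lia) (d + 1)
  have : 0 < (r + d).choose r := Nat.choose_pos (by lia)
  have : 0 < (r - 1 + (d + 1) / 2).choose (r - 1) := Nat.choose_pos (by lia)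
  rw [Nat.add_sub_cancel]
  lia

end ExponentGap

section Estimates

/-- The closed form `α` of the paper for `q ^ (d - 1) * P`, where `P` is the number of monic
originals of degree `j` in `r` variables over a field with `q` elements. It counts the pairs of
such a polynomial and a univariate monic original polynomial of degree `d`. -/
noncomputable def pairCount (q : ℝ) (r d j : ℕ) : ℝ :=
  q ^ ((r + j).choose r + d - 3) * (1 - q⁻¹ ^ (r - 1 + j).choose (r - 1)) / (1 - q⁻¹)

/-- The relative error `β` of the paper, where `k` stands for `n / ℓ`. -/
noncomputable def relativeError (q : ℝ) (r k : ℕ) : ℝ :=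
  2 * q ^ (-((r - 1 + k).choose (r - 1) : ℝ) / 2 + 1) / (1 - q⁻¹)

section

variable {q : ℝ} {r : ℕ}

lemma one_sub_inv_pos (hq : 1 < q) : 0 < 1 - q⁻¹ :=
  sub_pos.mpr (inv_lt_one_of_one_lt₀ hq)

lemma inv_one_sub_inv_le_two (hq : 2 ≤ q) : (1 - q⁻¹)⁻¹ ≤ 2 := by
  have : q⁻¹ ≤ 2⁻¹ := inv_anti₀ two_pos hq
  rw [inv_le_comm₀ (one_sub_inv_pos (by linarith)) two_pos]
  linarith

lemma relativeError_nonneg (hq : 1 < q) (r k : ℕ) : 0 ≤ relativeError q r k := by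
  have := one_sub_inv_pos hq
  unfold relativeError
  positivity

lemma sum_inv_pow_le_of_injOn {ι : Type*} {s : Finset ι} {e : ι → ℕ} (hq : 1 < q)
    (he : Set.InjOn e s) : ∑ i ∈ s, q⁻¹ ^ e i ≤ (1 - q⁻¹)⁻¹ := by
  have inv_nonneg : 0 ≤ q⁻¹ := by positivity
  have inv_lt_one : q⁻¹ < 1 := inv_lt_one_of_one_lt₀ hq
  rw [← Finset.sum_image (f := fun t => q⁻¹ ^ t) he,
    ← tsum_geometric_of_lt_one inv_nonneg inv_lt_one]
  exact (summable_geometric_of_lt_one inv_nonneg inv_lt_one).sum_le_tsum _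
    fun _ _ => by positivity

lemma pow_le_mul_relativeError (hq : 1 < q) {a b k t : ℕ}
    (h : 2 * (a + t) + (r - 1 + k).choose (r - 1) ≤ 2 * b + 2) :
    q ^ a / (1 - q⁻¹) ≤ q ^ b * (relativeError q r k / 2 * q⁻¹ ^ t) := by
  have hq0 : 0 < q := by linarith
  have hexp : (a : ℝ) ≤ b + (-((r - 1 + k).choose (r - 1) : ℝ) / 2 + 1) + -t := by
    have : (2 * (a + t) + (r - 1 + k).choose (r - 1) : ℝ) ≤ 2 * b + 2 := by exact_mod_cast h
    linarith
  have hpow := Real.rpow_le_rpow_of_exponent_le hq.le hexp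
  rw [Real.rpow_add hq0, Real.rpow_add hq0, Real.rpow_neg hq0.le, Real.rpow_natCast,
    Real.rpow_natCast, Real.rpow_natCast, ← inv_pow] at hpow
  refine (div_le_div_of_nonneg_right hpow (one_sub_inv_pos hq).le).trans_eq ?_
  rw [relativeError]
  ring

variable {d j : ℕ}

lemma pairCount_nonneg (hq : 1 < q) (r d j : ℕ) : 0 ≤ pairCount q r d j := by
  have := one_sub_inv_pos hq
  have : q⁻¹ ^ (r - 1 + j).choose (r - 1) ≤ 1 :=
    pow_le_one₀ (by positivity) (inv_le_one_of_one_le₀ hq.le)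
  rw [pairCount]
  have := sub_nonneg.mpr this
  positivity

lemma pairCount_le (hq : 1 < q) (r d j : ℕ) :
    pairCount q r d j ≤ q ^ ((r + j).choose r + d - 3) / (1 - q⁻¹) := by
  have := one_sub_inv_pos hq
  have : 0 ≤ q⁻¹ ^ (r - 1 + j).choose (r - 1) := by positivity
  rw [pairCount]
  gcongr
  exact mul_le_of_le_one_right (by positivity) (by linarith)

lemma pow_le_pairCount (hq : 1 < q) (r d j : ℕ) :
    q ^ ((r + j).choose r + d - 3) ≤ pairCount q r d j := by
  have hpos := one_sub_inv_pos hq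
  have : q⁻¹ ^ (r - 1 + j).choose (r - 1) ≤ q⁻¹ :=
    pow_le_of_le_one (by positivity) (inv_le_one_of_one_le₀ hq.le)
      (Nat.choose_pos (Nat.le_add_right _ _)).ne'
  rw [pairCount, le_div_iff₀ hpos]
  gcongr

lemma pairCount_le_mul_relativeError (hq : 1 < q) (hr : 2 ≤ r) (hj : 1 ≤ j) {d' j' k t : ℕ}
    (hj' : 1 ≤ j')
    (h : 2 * ((r + j).choose r + d + t) + (r - 1 + k).choose (r - 1) ≤
      2 * ((r + j').choose r + d') + 2) :
    pairCount q r d j ≤ pairCount q r d' j' * (relativeError q r k / 2 * q⁻¹ ^ t) := by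
  have := three_le_choose_add hr hj
  have := three_le_choose_add hr hj'
  have := relativeError_nonneg hq r k
  calc pairCount q r d j ≤ q ^ ((r + j).choose r + d - 3) / (1 - q⁻¹) := pairCount_le hq r d j
    _ ≤ q ^ ((r + j').choose r + d' - 3) * (relativeError q r k / 2 * q⁻¹ ^ t) :=
        pow_le_mul_relativeError hq (by lia)
    _ ≤ pairCount q r d' j' * (relativeError q r k / 2 * q⁻¹ ^ t) := by
        gcongr
        exact pow_le_pairCount hq r d' j'

end

section

variable {F : Type*} [Field F] [Finite F] {r d j : ℕ}

lemma two_le_natCard_cast (F : Type*) [Nontrivial F] [Finite F] : (2 : ℝ) ≤ Nat.card F := by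
  exact_mod_cast Finite.one_lt_card (α := F)

lemma natCard_pow_mul_ncard_monicOriginals (hr : 2 ≤ r) (hd : 0 < d) (hj : 0 < j) :
    (Nat.card F : ℝ) ^ (d - 1) * (monicOriginals (Fin r) F j).ncard =
      pairCount (Nat.card F) r d j := by
  have hq := two_le_natCard_cast F
  have hcard := congrArg (Nat.cast : ℕ → ℝ) (ncard_monicOriginals (F := F) (r := r) (by lia) hj)
  push_cast [Nat.cast_sub (Nat.card_pos (α := F))] at hcard
  have hthree := three_le_choose_add hr hj
  obtain ⟨d, rfl⟩ := Nat.exists_eq_add_of_le' hd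
  obtain ⟨j, rfl⟩ := Nat.exists_eq_add_of_le' hj
  have hpascal := choose_add_succ (r := r) (by lia) j
  have hchoose : 0 < (r + j).choose r := Nat.choose_pos (by lia)
  simp only [pairCount, Nat.add_sub_cancel] at hcard ⊢
  generalize (Nat.card F : ℝ) = q at *
  generalize (r - 1 + (j + 1)).choose (r - 1) = c at *
  generalize (r + (j + 1)).choose r = a at *
  have hpow : q ^ (a + (d + 1) - 3) * q = q ^ d * q ^ (a - 1) := by
    rw [← pow_succ, ← pow_add]
    congr 1
    lia
  have hpow' : q ^ (a - 1) * q⁻¹ ^ c = q ^ ((r + j).choose r - 1) := by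
    rw [inv_pow, ← div_eq_mul_inv, div_eq_iff (by positivity), ← pow_add]
    congr 1
    lia
  rw [eq_div_iff (one_sub_inv_pos (by linarith)).ne', ← mul_left_inj' (show q ≠ 0 by positivity)]
  calc q ^ d * (monicOriginals (Fin r) F (j + 1)).ncard * (1 - q⁻¹) * q
      = q ^ d * ((q - 1) * (monicOriginals (Fin r) F (j + 1)).ncard) := by field_simp
    _ = q ^ d * (q ^ (a - 1) * (1 - q⁻¹ ^ c)) := by rw [mul_one_sub, hpow', ← hcard]; ring
    _ = q ^ (a + (d + 1) - 3) * (1 - q⁻¹ ^ c) * q := by rw [← mul_assoc, ← hpow]; ring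

lemma ncard_monicForms_le (hr : 1 ≤ r) (i : ℕ) :
    ((monicForms (Fin r) F i).ncard : ℝ) ≤
      (Nat.card F : ℝ) ^ ((r - 1 + i).choose (r - 1) - 1) / (1 - (Nat.card F : ℝ)⁻¹) := by
  have hq := two_le_natCard_cast F
  have hcard := congrArg (Nat.cast : ℕ → ℝ) (ncard_monicForms (F := F) hr i)
  push_cast [Nat.cast_sub (Nat.card_pos (α := F))] at hcard
  have hchoose : (r - 1 + i).choose (r - 1) ≠ 0 := (Nat.choose_pos (by lia)).ne'
  rw [le_div_iff₀ (one_sub_inv_pos (by linarith))]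
  refine le_of_mul_le_mul_right ?_ (show (0 : ℝ) < Nat.card F by linarith)
  rw [pow_sub_one_mul hchoose, ← hcard, mul_assoc, one_sub_mul, inv_mul_cancel₀ (by linarith)]
  linarith

lemma sum_ncard_monicForms_le (hr : 2 ≤ r) (k : ℕ) :
    (∑ i ∈ Finset.Icc 1 k, ((monicForms (Fin r) F i).ncard : ℝ)) ≤
      (Nat.card F : ℝ) ^ ((r - 1 + k).choose (r - 1) - 1) / (1 - (Nat.card F : ℝ)⁻¹) *
        (1 - (Nat.card F : ℝ)⁻¹)⁻¹ := by
  have hq := two_le_natCard_cast F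
  have hpos := one_sub_inv_pos (q := Nat.card F) (by linarith)
  have hterm (i : ℕ) (hi : i ∈ Finset.Icc 1 k) : ((monicForms (Fin r) F i).ncard : ℝ) ≤
      (Nat.card F : ℝ) ^ ((r - 1 + k).choose (r - 1) - 1) / (1 - (Nat.card F : ℝ)⁻¹) *
        (Nat.card F : ℝ)⁻¹ ^ (k - i) := by
    refine (ncard_monicForms_le (by lia) i).trans ?_
    rw [div_mul_eq_mul_div, inv_pow, ← div_eq_mul_inv]
    gcongr
    rw [le_div_iff₀ (by positivity), ← pow_add]
    have := choose_add_sub_le (s := r - 1) (by lia) (Finset.mem_Icc.mp hi).2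
    have : 0 < (r - 1 + i).choose (r - 1) := Nat.choose_pos (by lia)
    exact pow_le_pow_right₀ (by linarith) (by lia)
  refine (Finset.sum_le_sum hterm).trans ?_
  rw [← Finset.mul_sum]
  gcongr
  refine sum_inv_pow_le_of_injOn (by linarith) fun i hi i' hi' => ?_
  simp only [Finset.coe_Icc, Set.mem_Icc] at hi hi'
  lia

lemma ncard_isProperPower_leadingForm_le_relativeError (hr : 2 ≤ r) (hd : 0 < d) :
    ({h ∈ monicOriginals (Fin r) F d | IsProperPower (leadingForm h)}.ncard : ℝ) ≤
      (monicOriginals (Fin r) F d).ncard * relativeError (Nat.card F) r d := by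
  have hq := two_le_natCard_cast F
  have hpos := one_sub_inv_pos (q := Nat.card F) (by linarith)
  have herror := relativeError_nonneg (q := Nat.card F) (by linarith) r d
  have hP := natCard_pow_mul_ncard_monicOriginals (F := F) hr one_pos hd
  rw [Nat.sub_self, pow_zero, one_mul] at hP
  have hcount := ncard_isProperPower_leadingForm_le (F := F) (r := r) (by lia) hd
  calc ({h ∈ monicOriginals (Fin r) F d | IsProperPower (leadingForm h)}.ncard : ℝ)
      ≤ (∑ i ∈ Finset.Icc 1 (d / 2), ((monicForms (Fin r) F i).ncard : ℝ)) *
          (Nat.card F : ℝ) ^ ((r + (d - 1)).choose r - 1) := by exact_mod_cast hcount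
    _ ≤ (Nat.card F : ℝ) ^ ((r - 1 + d / 2).choose (r - 1) - 1) / (1 - (Nat.card F : ℝ)⁻¹) *
          (1 - (Nat.card F : ℝ)⁻¹)⁻¹ * (Nat.card F : ℝ) ^ ((r + (d - 1)).choose r - 1) := by
        gcongr
        exact sum_ncard_monicForms_le hr (d / 2)
    _ = (Nat.card F : ℝ) ^ ((r - 1 + d / 2).choose (r - 1) - 1 + ((r + (d - 1)).choose r - 1)) /
          (1 - (Nat.card F : ℝ)⁻¹) * (1 - (Nat.card F : ℝ)⁻¹)⁻¹ := by ring
    _ ≤ pairCount (Nat.card F) r 1 d *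
          (relativeError (Nat.card F) r d / 2 * (Nat.card F : ℝ)⁻¹ ^ 0) * 2 := by
        gcongr
        · exact mul_nonneg (pairCount_nonneg (by linarith) r 1 d) (by positivity)
        · refine (pow_le_mul_relativeError (by linarith) (exponent_gap_half hr hd)).trans ?_
          gcongr
          exact pow_le_pairCount (by linarith) r 1 d
        · exact inv_one_sub_inv_le_two hq
    _ = (monicOriginals (Fin r) F d).ncard * relativeError (Nat.card F) r d := by
        rw [hP]
        ring

end

end Estimates

section Assembly

variable {q : ℝ} {r n : ℕ}

lemma injOn_div_sub_one (n : ℕ) : Set.InjOn (fun d => n / d - 1) n.divisors := by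
  intro a ha b hb hab
  simp only [Finset.mem_coe] at ha hb
  have := Nat.div_pos (Nat.divisor_le ha) (Nat.pos_of_mem_divisors ha)
  have := Nat.div_pos (Nat.divisor_le hb) (Nat.pos_of_mem_divisors hb)
  obtain ⟨ha, hn⟩ := Nat.mem_divisors.mp ha
  obtain ⟨hb, -⟩ := Nat.mem_divisors.mp hb
  rw [← Nat.div_div_self ha hn, ← Nat.div_div_self hb hn]
  congr 1
  lia

lemma pairCount_le_of_minFac_lt (hq : 1 < q) (hr : 2 ≤ r) (hn : 1 < n) (hcomp : ¬ n.Prime)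
    (hex : ¬ (r = 2 ∧ (n / n.minFac).Prime ∧ n / n.minFac ≤ 2 * n.minFac - 5)) {d : ℕ}
    (hdn : d ∣ n) (hd : n.minFac < d) :
    pairCount q r d (n / d) ≤ pairCount q r n.minFac (n / n.minFac) *
      (relativeError q r (n / n.minFac) / 2 * q⁻¹ ^ (n / d - 1)) := by
  have hn0 : 0 < n := by lia
  have hle : n.minFac ≤ n / n.minFac := Nat.minFac_le_div hn0 hcomp
  have hprime : n.minFac.Prime := Nat.minFac_prime hn.ne'
  have hj : 0 < n / d := Nat.div_pos (Nat.le_of_dvd hn0 hdn) (by lia)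
  have hk : 0 < n / n.minFac := hprime.pos.trans_le hle
  have hmin (p : ℕ) (hp : p.Prime) (hpk : p ∣ n / n.minFac) : n.minFac ≤ p :=
    Nat.minFac_le_of_dvd hp.two_le (hpk.trans (Nat.div_dvd_of_dvd n.minFac_dvd))
  have hgap := exponent_gap hr hprime hle hmin hex hj
    ((Nat.div_lt_div_left hn0.ne' hdn n.minFac_dvd).mpr hd)
    ((Nat.div_mul_cancel hdn).trans (Nat.div_mul_cancel n.minFac_dvd).symm)
  exact pairCount_le_mul_relativeError hq hr hj hk (by lia)

lemma sum_pairCount_erase_minFac_le (hq : 2 ≤ q) (hr : 2 ≤ r) (hn : 1 < n) (hcomp : ¬ n.Prime)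
    (hex : ¬ (r = 2 ∧ (n / n.minFac).Prime ∧ n / n.minFac ≤ 2 * n.minFac - 5)) :
    ∑ d ∈ (n.divisors.erase 1).erase n.minFac, pairCount q r d (n / d) ≤
      pairCount q r n.minFac (n / n.minFac) * relativeError q r (n / n.minFac) := by
  have hpos := pairCount_nonneg (q := q) (by linarith) r n.minFac (n / n.minFac)
  have herror := relativeError_nonneg (q := q) (by linarith) r (n / n.minFac)
  have hterm (d : ℕ) (hd : d ∈ (n.divisors.erase 1).erase n.minFac) :
      pairCount q r d (n / d) ≤ pairCount q r n.minFac (n / n.minFac) *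
        (relativeError q r (n / n.minFac) / 2 * q⁻¹ ^ (n / d - 1)) := by
    simp only [Finset.mem_erase, Nat.mem_divisors] at hd
    obtain ⟨hd_ne, hd1, hdn, -⟩ := hd
    have := Nat.pos_of_dvd_of_pos hdn (by lia)
    exact pairCount_le_of_minFac_lt (by linarith) hr hn hcomp hex hdn
      (lt_of_le_of_ne (Nat.minFac_le_of_dvd (by lia) hdn) hd_ne.symm)
  have hsubset : (n.divisors.erase 1).erase n.minFac ⊆ n.divisors :=
    (Finset.erase_subset _ _).trans (Finset.erase_subset _ _)
  have hgeom : ∑ d ∈ (n.divisors.erase 1).erase n.minFac, q⁻¹ ^ (n / d - 1) ≤ 2 :=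
    (sum_inv_pow_le_of_injOn (by linarith) ((injOn_div_sub_one n).mono hsubset)).trans
      (inv_one_sub_inv_le_two hq)
  calc _ ≤ ∑ d ∈ (n.divisors.erase 1).erase n.minFac, _ := Finset.sum_le_sum hterm
    _ = pairCount q r n.minFac (n / n.minFac) * (relativeError q r (n / n.minFac) / 2 *
          ∑ d ∈ (n.divisors.erase 1).erase n.minFac, q⁻¹ ^ (n / d - 1)) := by
        rw [Finset.mul_sum, Finset.mul_sum]
    _ ≤ pairCount q r n.minFac (n / n.minFac) * (relativeError q r (n / n.minFac) / 2 * 2) := by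
        gcongr
    _ = _ := by ring

lemma sum_pairCount_erase_self_le (hq : 1 < q) {k l : ℕ} (hl : l.Prime) (hk : k.Prime)
    (hlk : l ≤ k) (hkl : k ≤ 2 * l - 5) :
    ∑ d ∈ ((k * l).divisors.erase 1).erase (k * l), pairCount q 2 d (k * l / d) ≤
      pairCount q 2 (k * l) 1 * relativeError q 2 k := by
  have := hl.two_le
  have hsub : ((k * l).divisors.erase 1).erase (k * l) ⊆ {l, k} := by
    intro d hd
    simp only [Finset.mem_erase, Nat.mem_divisors] at hd
    obtain ⟨a, b, ha, hb, rfl⟩ := (dvd_mul (k := d) (m := k) (n := l)).mp hd.2.2.1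
    rcases (Nat.dvd_prime hk).mp ha with rfl | rfl <;>
      rcases (Nat.dvd_prime hl).mp hb with rfl | rfl <;> simp_all
  have hterm {d j : ℕ} (hj : 1 ≤ j)
      (h : (j + 2) * (j + 1) + 2 * d + (k + 1) ≤ 2 * (k * l) + 8) :
      pairCount q 2 d j ≤ pairCount q 2 (k * l) 1 * (relativeError q 2 k / 2 * q⁻¹ ^ 0) := by
    refine pairCount_le_mul_relativeError hq le_rfl hj le_rfl ?_
    have := two_mul_choose_add_two j
    norm_num [add_comm 1 k, Nat.choose]
    lia
  have hexp_minFac : (k + 2) * (k + 1) + 2 * l + (k + 1) ≤ 2 * (k * l) + 8 := by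
    obtain ⟨e, he⟩ := Nat.exists_eq_add_of_le (show k + 5 ≤ 2 * l by lia)
    nlinarith [Nat.mul_le_mul_right e hk.one_le]
  have hexp_cofactor : (l + 2) * (l + 1) + 2 * k + (k + 1) ≤ 2 * (k * l) + 8 := by
    have hl5 : 5 ≤ l := by lia
    nlinarith [Nat.mul_le_mul_right l hlk]
  have hpos := pairCount_nonneg hq 2
  calc _ ≤ ∑ d ∈ {l, k}, pairCount q 2 d (k * l / d) :=
        Finset.sum_le_sum_of_subset_of_nonneg hsub fun d _ _ => hpos _ _
    _ ≤ pairCount q 2 l k + pairCount q 2 k l := by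
        have hkk : k * l / k = l := Nat.mul_div_cancel_left l hk.pos
        have hll : k * l / l = k := Nat.mul_div_cancel k hl.pos
        rcases eq_or_ne l k with rfl | hne
        · simpa [hll] using hpos l l
        · rw [Finset.sum_pair hne, hkk, hll]
    _ ≤ _ := add_le_add (hterm hk.one_le hexp_minFac) (hterm hl.one_le hexp_cofactor)
    _ = _ := by ring

variable {F : Type*} [Field F] [Finite F]

lemma ncard_decomposables_le_sum_pairCount (hr : 2 ≤ r) (hn : n ≠ 0) :
    ((decomposables (Fin r) F n).ncard : ℝ) ≤
      ∑ d ∈ n.divisors.erase 1, pairCount (Nat.card F) r d (n / d) := by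
  refine (Nat.cast_le.mpr (ncard_decomposables_le hn)).trans_eq ?_
  push_cast
  refine Finset.sum_congr rfl fun d hd => ?_
  have hd0 := pos_of_mem_divisors_erase hd
  exact natCard_pow_mul_ncard_monicOriginals hr hd0
    (Nat.div_pos (Nat.divisor_le (Finset.mem_of_mem_erase hd)) hd0)

lemma pairCount_le_ncard_decomposables_add (hr : 2 ≤ r) (hn : n ≠ 0) {l : ℕ} (hl : l.Prime)
    (hln : l ∣ n) :
    pairCount (Nat.card F) r l (n / l) ≤ (decomposables (Fin r) F n).ncard +
      pairCount (Nat.card F) r l (n / l) * relativeError (Nat.card F) r (n / l) := by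
  have hj : 0 < n / l := Nat.div_pos (Nat.le_of_dvd (by lia) hln) hl.pos
  have hl_mem : l ∈ n.divisors.erase 1 := by simp [hln, hn, hl.ne_one]
  let bad := {h ∈ monicOriginals (Fin r) F (n / l) | IsProperPower (leadingForm h)}
  let good := {h ∈ monicOriginals (Fin r) F (n / l) | ¬ IsProperPower (leadingForm h)}
  have hunion : (monicOriginals (Fin r) F (n / l)).ncard ≤ good.ncard + bad.ncard := by
    have hcover : monicOriginals (Fin r) F (n / l) = good ∪ bad := by
      ext h
      simp only [good, bad, Set.mem_union, Set.mem_ofPred_eq]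
      tauto
    exact hcover ▸ Set.ncard_union_le good bad
  have hgood : Nat.card F ^ (l - 1) * good.ncard ≤ (decomposables (Fin r) F n).ncard :=
    ncard_le_ncard_decomposables hl_mem (fun _ hh => hh.1) (injOn_aeval_of_prime hl hj)
  have hbad := ncard_isProperPower_leadingForm_le_relativeError (F := F) hr hj
  rw [← natCard_pow_mul_ncard_monicOriginals hr hl.pos hj]
  calc (Nat.card F : ℝ) ^ (l - 1) * (monicOriginals (Fin r) F (n / l)).ncard
      ≤ (Nat.card F : ℝ) ^ (l - 1) * (good.ncard + bad.ncard) := by gcongr; exact_mod_cast hunion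
    _ = (Nat.card F ^ (l - 1) * good.ncard : ℕ) + (Nat.card F : ℝ) ^ (l - 1) * bad.ncard := by
        push_cast
        ring
    _ ≤ _ := by
        rw [mul_assoc]
        gcongr

lemma pairCount_le_ncard_decomposables (hr : 2 ≤ r) (hn : 1 < n) :
    pairCount (Nat.card F) r n 1 ≤ (decomposables (Fin r) F n).ncard := by
  have hn_mem : n ∈ n.divisors.erase 1 := by simp [hn.ne', (zero_lt_one.trans hn).ne']
  have hS : monicOriginals (Fin r) F 1 ⊆ monicOriginals (Fin r) F (n / n) := by
    rw [Nat.div_self (by lia)]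
  rw [← natCard_pow_mul_ncard_monicOriginals hr (by lia) one_pos]
  exact_mod_cast ncard_le_ncard_decomposables hn_mem hS (injOn_aeval_linear (by lia))

theorem abs_ncard_decomposables_sub_pairCount_minFac_le (hr : 2 ≤ r) (hn : 1 < n)
    (hcomp : ¬ n.Prime)
    (hex : ¬ (r = 2 ∧ (n / n.minFac).Prime ∧ n / n.minFac ≤ 2 * n.minFac - 5)) :
    |((decomposables (Fin r) F n).ncard : ℝ) -
        pairCount (Nat.card F) r n.minFac (n / n.minFac)| ≤
      pairCount (Nat.card F) r n.minFac (n / n.minFac) *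
        relativeError (Nat.card F) r (n / n.minFac) := by
  have hprime : n.minFac.Prime := Nat.minFac_prime hn.ne'
  have hmem : n.minFac ∈ n.divisors.erase 1 := by
    simp [n.minFac_dvd, hn.ne', (zero_lt_one.trans hn).ne']
  have hupper := ncard_decomposables_le_sum_pairCount (F := F) hr (show n ≠ 0 by lia)
  have hlower := pairCount_le_ncard_decomposables_add (F := F) hr (by lia) hprime n.minFac_dvd
  have hrest := sum_pairCount_erase_minFac_le (two_le_natCard_cast F) hr (by lia) hcomp hex
  rw [← Finset.add_sum_erase _ _ hmem] at hupper
  exact abs_sub_le_iff.mpr ⟨by linarith, by linarith⟩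

theorem abs_ncard_decomposables_sub_pairCount_self_le {k l : ℕ} (hl : l.Prime) (hk : k.Prime)
    (hlk : l ≤ k) (hkl : k ≤ 2 * l - 5) :
    |((decomposables (Fin 2) F (k * l)).ncard : ℝ) - pairCount (Nat.card F) 2 (k * l) 1| ≤
      pairCount (Nat.card F) 2 (k * l) 1 * relativeError (Nat.card F) 2 k := by
  have hq : (1 : ℝ) < Nat.card F := by linarith [two_le_natCard_cast F]
  have hn : 1 < k * l := by nlinarith [hl.two_le, hk.two_le]
  have hmem : k * l ∈ (k * l).divisors.erase 1 := by simp [hn.ne', hl.ne_zero, hk.ne_zero]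
  have hupper := ncard_decomposables_le_sum_pairCount (F := F) le_rfl (show k * l ≠ 0 by lia)
  have hlower := pairCount_le_ncard_decomposables (F := F) (r := 2) le_rfl hn
  have hrest := sum_pairCount_erase_self_le hq hl hk hlk hkl
  have herror := mul_nonneg (pairCount_nonneg hq 2 (k * l) 1) (relativeError_nonneg hq 2 k)
  rw [← Finset.add_sum_erase _ _ hmem, Nat.div_self (by lia)] at hupper
  exact abs_sub_le_iff.mpr ⟨by linarith, by linarith⟩

end Assembly

theorem stmt9 (q : ℕ) (F : Type) [Field F] [Fintype F] (hq : Fintype.card F = q)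
    (r n : ℕ) (hr : 2 ≤ r) (hn : 4 ≤ n) (hcomp : ¬ n.Prime) (ℓ m : ℕ) (hl : ℓ = n.minFac)
    (hm : m = if r = 2 ∧ (n / ℓ).Prime ∧ n / ℓ ≤ 2 * ℓ - 5 then n else ℓ) :
    |(Dcount F r n : ℝ) -
        (q : ℝ) ^ (Nat.choose (r + n / m) r + m - 3) *
          (1 - ((q : ℝ)⁻¹) ^ (Nat.choose (r - 1 + n / m) (r - 1))) / (1 - (q : ℝ)⁻¹)| ≤
      (q : ℝ) ^ (Nat.choose (r + n / m) r + m - 3) *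
          (1 - ((q : ℝ)⁻¹) ^ (Nat.choose (r - 1 + n / m) (r - 1))) / (1 - (q : ℝ)⁻¹) *
        (2 * (q : ℝ) ^ (-(Nat.choose (r - 1 + n / ℓ) (r - 1) : ℝ) / 2 + 1) / (1 - (q : ℝ)⁻¹)) := by
  change |(Dcount F r n : ℝ) - pairCount q r m (n / m)| ≤
    pairCount q r m (n / m) * relativeError q r (n / ℓ)
  rw [Dcount_eq_ncard_decomposables, ← hq, ← Nat.card_eq_fintype_card]
  subst hl
  split_ifs at hm with hex
  · obtain ⟨rfl, hk, hkl⟩ := hex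
    have hprime : n.minFac.Prime := Nat.minFac_prime (by lia)
    have hle : n.minFac ≤ n / n.minFac := Nat.minFac_le_div (by lia) hcomp
    have hexc := abs_ncard_decomposables_sub_pairCount_self_le (F := F) hprime hk hle hkl
    rw [Nat.div_mul_cancel n.minFac_dvd] at hexc
    rwa [hm, Nat.div_self (by lia)]
  · rw [hm]
    exact abs_ncard_decomposables_sub_pairCount_minFac_le hr (by lia) hcomp hex
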